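/- For every planar polygonal disk P ⊂ ℂ and every ε > 0 there exists a finite decomposition {P_k}_{k ∈ K} of P into non-overlapping polygonal disks such that: (i) ℓ(∂P_k) < ε for each k ∈ K; (ii) any two points x, y ∈ ⋃_{k ∈ K} ∂P_k can be joined by a path contained in ⋃_{k ∈ K} ∂P_k of length at most ℓ(∂P); and (iii) Σ_{k ∈ K} ℓ(∂P_k)² ≤ 17·H²(P). -/

import Mathlib

open MeasureTheory Metric
open scoped ENNReal

/-!
STATEMENT 3: Decomposition of a planar polygonal disk into small non-overlapping polygonal
disks with controlled boundary lengths.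

A planar polygonal disk is a compact subset `P ⊆ ℂ` homeomorphic to a closed disk whose
topological boundary is a polygon: a union of finitely many non-degenerate straight line
segments that pairwise overlap at most at their endpoints (their relative interiors, the
corresponding open segments, are disjoint).  Lengths of boundaries are measured by the
Hausdorff 1-measure `μH[1]`, and the area `H²(P)` by Lebesgue measure (with which the
normalized Hausdorff 2-measure on the plane coincides).
-/

/-- A planar polygonal disk: a compact set homeomorphic to a closed disk whose topological
boundary is the union of finitely many non-overlapping straight line segments. -/
def IsPolygonalDisk (P : Set ℂ) : Prop :=
  IsCompact P ∧ Nonempty (↥P ≃ₜ ↥(Metric.closedBall (0 : ℂ) 1)) ∧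
    ∃ E : Finset (ℂ × ℂ),
      (∀ e ∈ E, e.1 ≠ e.2) ∧
      frontier P = ⋃ e ∈ E, segment ℝ e.1 e.2 ∧
      ∀ e ∈ E, ∀ e' ∈ E, e ≠ e' →
        openSegment ℝ e.1 e.2 ∩ openSegment ℝ e'.1 e'.2 = ∅

/-!
Extend the edges of `P` to lines, add the lines of a square grid of mesh `δ`, and cut `P` along
all of them. The pieces are the chambers of this arrangement inside `P`, which are convex polygons.

* The union of the boundaries of the pieces is the part of the lines lying in `P`. Through each of
  its points runs a chord of `P` along one of the lines; a chord has length at most `ℓ(∂P) / 2`,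
  the length of the shorter arc of `∂P` between its ends, so the point is within `ℓ(∂P) / 4` of
  `∂P`. Two such detours and a shorter arc of `∂P` have total length at most `ℓ(∂P)`.
* Perimeter is monotone under inclusion of convex bodies (push the smaller boundary out along
  normals), so every piece has perimeter at most `4 δ`, the perimeter of its grid square.
* A grid square that no edge line crosses is a single piece and contributes at most `16 δ ^ 2`,
  that is 16 times its area. The remaining squares split into a bounded number of pieces each, and
  their total area tends to `0` with `δ`, so their contribution is eventually at most `H²(P)`.

That `∂P` is a Jordan curve and `P` the closure of its interior comes from invariance of domain in
the plane, proved with a winding number.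
-/

open Set
open scoped Topology

section InvarianceOfDomain

lemma not_exists_continuousOn_exp_eq_id_on_circle :
    ¬ ∃ g : ℂ → ℂ, ContinuousOn g (sphere 0 1) ∧ ∀ z ∈ sphere (0 : ℂ) 1, Complex.exp (g z) = z := by
  rintro ⟨g, hg, hexp⟩
  have hmem (θ : ℝ) : Complex.exp (θ * Complex.I) ∈ sphere (0 : ℂ) 1 := by
    simp [Complex.norm_exp_ofReal_mul_I]
  let k (θ : ℝ) : ℝ := ((g (Complex.exp (θ * Complex.I))).im - θ) / (2 * Real.pi)
  have hk : Continuous k :=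
    ((Complex.continuous_im.comp (hg.comp_continuous (by fun_prop) hmem)).sub
      continuous_id).div_const _
  have hint (θ : ℝ) : ∃ n : ℤ, k θ = n := by
    obtain ⟨n, hn⟩ := Complex.exp_eq_exp_iff_exists_int.1 (hexp _ (hmem θ))
    refine ⟨n, ?_⟩
    simp [k, hn]
  have hperiod : k (2 * Real.pi) = k 0 - 1 := by
    simp only [k, Complex.ofReal_mul, Complex.ofReal_ofNat, Complex.exp_two_pi_mul_I,
      Complex.ofReal_zero, zero_mul, Complex.exp_zero]
    field_simp
    ring
  have hhalf : k 0 - 1 / 2 ∈ Icc (k (2 * Real.pi)) (k 0) := by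
    constructor <;> linarith
  obtain ⟨θ, -, hθ⟩ :=
    intermediate_value_Icc' (by positivity : 0 ≤ 2 * Real.pi) hk.continuousOn hhalf
  obtain ⟨n, hn⟩ := hint θ
  obtain ⟨m, hm⟩ := hint 0
  have : (2 * n : ℝ) = 2 * m - 1 := by linarith
  have : 2 * n = 2 * m - 1 := by exact_mod_cast this
  omega

lemma exists_continuousOn_exp_eq_on_closedBall {K : ℂ → ℂ} (hK : ContinuousOn K (closedBall 0 1))
    (hne : ∀ z ∈ closedBall (0 : ℂ) 1, K z ≠ 0) :
    ∃ F : ℂ → ℂ, Continuous F ∧ ∀ z ∈ closedBall (0 : ℂ) 1, Complex.exp (F z) = K z := by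
  obtain ⟨r, hr⟩ := ContinuousMap.exists_restrict_eq (Y := closedBall (0 : ℂ) 1)
    isClosed_closedBall (ContinuousMap.id (closedBall (0 : ℂ) 1))
  have hsc : IsSimplyConnected (univ : Set ℂ) :=
    haveI := (convex_univ (𝕜 := ℝ) (E := ℂ)).contractibleSpace univ_nonempty
    SimplyConnectedSpace.ofContractible _
  obtain ⟨F, hF, hexp⟩ := Complex.exists_continuousOn_eqOn_exp_comp
    (U := univ) (g := fun z ↦ K (r z)) hsc isOpen_univ
    (hK.comp_continuous (by fun_prop) fun z ↦ (r z).2).continuousOn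
    (by rintro ⟨z, -, hz⟩; exact hne _ (r z).2 hz)
  refine ⟨F, continuousOn_univ.1 hF, fun z hz ↦ (hexp (mem_univ z)).trans ?_⟩
  have hrz : r z = ⟨z, hz⟩ := congrArg (fun f ↦ f ⟨z, hz⟩) hr
  simp only [hrz]

lemma exists_eq_zero_of_near_id_on_sphere {K : ℂ → ℂ} (hK : ContinuousOn K (closedBall 0 1))
    (hnear : ∀ z ∈ sphere (0 : ℂ) 1, ‖K z - z‖ < 1) : ∃ z ∈ closedBall (0 : ℂ) 1, K z = 0 := by
  by_contra! hne
  obtain ⟨F, hF, hexp⟩ := exists_continuousOn_exp_eq_on_closedBall hK hne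
  have hz0 {z : ℂ} (hz : z ∈ sphere (0 : ℂ) 1) : z ≠ 0 := ne_zero_of_mem_unit_sphere ⟨z, hz⟩
  have hslit : ∀ z ∈ sphere (0 : ℂ) 1, K z / z ∈ Complex.slitPlane := fun z hz ↦ by
    have hsub : K z / z - 1 = (K z - z) / z := by field_simp [hz0 hz]
    have hlt : ‖K z / z - 1‖ < 1 := by
      rw [hsub, norm_div, mem_sphere_zero_iff_norm.1 hz, div_one]
      exact hnear z hz
    simpa using Complex.mem_slitPlane_of_norm_lt_one hlt
  have hquot : ContinuousOn (fun z ↦ K z / z) (sphere 0 1) :=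
    (hK.mono sphere_subset_closedBall).div continuousOn_id fun z hz ↦ hz0 hz
  refine not_exists_continuousOn_exp_eq_id_on_circle
    ⟨fun z ↦ F z - Complex.log (K z / z), hF.continuousOn.sub (hquot.clog hslit), fun z hz ↦ ?_⟩
  have hKz := hne z (sphere_subset_closedBall hz)
  rw [Complex.exp_sub, hexp z (sphere_subset_closedBall hz),
    Complex.exp_log (div_ne_zero hKz (hz0 hz)), div_div_cancel₀ hKz]

lemma exists_continuous_near_ne_zero_on_sphere {u : ℂ → ℂ} (hu : Continuous u) (c : ℂ) {ε δ : ℝ}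
    (hδ : 0 < δ) :
    ∃ v : ℂ → ℂ, Continuous v ∧ (∀ y, ‖v y - u y‖ < δ) ∧ ∀ y ∈ sphere c ε, v y ≠ 0 := by
  obtain ⟨g, hg, hgu, -⟩ := hu.exists_contDiff_approx 1 (ε := fun _ ↦ δ / 2)
    continuous_const fun _ ↦ by positivity
  have hcurve : ContDiff ℝ 1 fun θ : ℝ ↦ g (c + ε * Complex.exp (θ * Complex.I)) :=
    (hg.of_le (by simp)).comp <| contDiff_const.add <| contDiff_const.mul <|
      (Complex.ofRealCLM.contDiff.mul contDiff_const).cexp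
  obtain ⟨w, hw, hwδ⟩ := (hcurve.dense_compl_range_of_finrank_lt_finrank
    (by simp [Complex.finrank_real_complex])).exists_dist_lt 0 (half_pos hδ)
  refine ⟨fun y ↦ g y - w, hg.continuous.sub continuous_const, fun y ↦ ?_, fun y hy hzero ↦ hw ?_⟩
  · have hgy : ‖g y - u y‖ < δ / 2 := by simpa [dist_eq_norm] using hgu y
    have hwn : ‖w‖ < δ / 2 := by simpa using hwδ
    calc ‖g y - w - u y‖ = ‖(g y - u y) - w‖ := by ring_nf
      _ ≤ ‖g y - u y‖ + ‖w‖ := norm_sub_le _ _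
      _ < δ := by linarith
  · refine ⟨Complex.arg (y - c), ?_⟩
    have hpolar := Complex.norm_mul_exp_arg_mul_I (y - c)
    rw [mem_sphere_iff_norm.1 hy] at hpolar
    simp only [hpolar, add_sub_cancel, sub_eq_zero.1 hzero]

lemma exists_continuousOn_push_to_sphere {E : Type*} [NormedAddCommGroup E] [NormedSpace ℝ E]
    (c : E) (ε : ℝ) :
    ∃ Φ : E → E, ContinuousOn Φ {c}ᶜ ∧ (∀ y ∉ ball c ε, Φ y = y) ∧
      ∀ y ∈ ball c ε, y ≠ c → Φ y ∈ sphere c ε := by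
  refine ⟨fun y ↦ c + max (ε / ‖y - c‖) 1 • (y - c), ?_, fun y hy ↦ ?_, fun y hy hyc ↦ ?_⟩
  · have hdiv : ContinuousOn (fun y ↦ ε / ‖y - c‖) {c}ᶜ :=
      continuousOn_const.div (by fun_prop) fun y hy ↦ norm_ne_zero_iff.2 (sub_ne_zero.2 hy)
    fun_prop
  · have : ε ≤ ‖y - c‖ := by simpa [dist_eq_norm] using hy
    simp [max_eq_right (div_le_one_of_le₀ this (norm_nonneg _))]
  · have hpos : 0 < ‖y - c‖ := norm_pos_iff.2 (sub_ne_zero.2 hyc)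
    have hle : 1 ≤ ε / ‖y - c‖ := (one_le_div₀ hpos).2 (mem_ball_iff_norm.1 hy).le
    rw [mem_sphere_iff_norm, add_sub_cancel_left, max_eq_left hle, norm_smul,
      Real.norm_of_nonneg (zero_le_one.trans hle), div_mul_cancel₀ _ hpos.ne']

-- Perturb `u` to be nonzero on a small circle around a point `c ∉ X` near `p`, and push the part of
-- `X` inside that circle radially onto it.
lemma exists_continuousOn_ne_zero_near_of_mem_frontier {X : Set ℂ} (hX : IsCompact X) {p : ℂ}
    (hp : p ∈ frontier X) {u : ℂ → ℂ} (hu : Continuous u) {η δ : ℝ} (hη : 0 < η) (hδ : 0 < δ)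
    (hne : ∀ x ∈ X, x ≠ p → u x ≠ 0) :
    ∃ v : ℂ → ℂ, ContinuousOn v X ∧ (∀ x ∈ X, v x ≠ 0) ∧
      ∀ x ∈ X \ ball p η, ‖v x - u x‖ < δ := by
  obtain ⟨c, hcX, hpc⟩ : ∃ c ∈ Xᶜ, dist p c < η / 2 := by
    rw [frontier_eq_closure_inter_closure] at hp
    exact Metric.mem_closure_iff.1 hp.2 _ (half_pos hη)
  obtain ⟨δ', hδ', hlow⟩ : ∃ δ' > 0, ∀ x ∈ X \ ball c (η / 2), δ' ≤ ‖u x‖ := by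
    have hfar : ∀ x ∈ X \ ball c (η / 2), 0 < ‖u x‖ := fun x hx ↦
      norm_pos_iff.2 (hne x hx.1 fun h ↦ hx.2 (h ▸ hpc))
    exact (hX.diff isOpen_ball).exists_forall_le' hu.norm.continuousOn hfar
  obtain ⟨v, hv, hvu, hvne⟩ :=
    exists_continuous_near_ne_zero_on_sphere hu c (ε := η / 2) (lt_min hδ hδ')
  obtain ⟨Φ, hΦ, hΦfar, hΦnear⟩ := exists_continuousOn_push_to_sphere c (η / 2)
  have hXc : X ⊆ {c}ᶜ := fun x hx h ↦ hcX (mem_singleton_iff.1 h ▸ hx)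
  refine ⟨v ∘ Φ, hv.comp_continuousOn (hΦ.mono hXc), fun x hx ↦ ?_, fun x hx ↦ ?_⟩
  · by_cases hxc : x ∈ ball c (η / 2)
    · exact hvne _ (hΦnear x hxc (hXc hx))
    · rw [Function.comp_apply, hΦfar x hxc]
      intro hzero
      have hclose := hvu x
      rw [hzero, zero_sub, norm_neg] at hclose
      exact (hclose.trans_le (min_le_right _ _)).not_ge (hlow x ⟨hx, hxc⟩)
  · have hxc : x ∉ ball c (η / 2) := fun h ↦ hx.2 <| by
      have := dist_triangle x c p
      rw [mem_ball] at h ⊢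
      rw [dist_comm] at hpc
      linarith
    rw [Function.comp_apply, hΦfar x hxc]
    exact (hvu x).trans_le (min_le_left _ _)

lemma mem_interior_image_closedBall_zero_one {f : ℂ → ℂ} (hf : ContinuousOn f (closedBall 0 1))
    (hinj : InjOn f (closedBall 0 1)) : f 0 ∈ interior (f '' closedBall 0 1) := by
  set X := f '' closedBall (0 : ℂ) 1
  have hX : IsCompact X := (isCompact_closedBall _ _).image_of_continuousOn hf
  have h0 : (0 : ℂ) ∈ closedBall 0 1 := mem_closedBall_self zero_le_one
  obtain ⟨u, hu⟩ : ∃ u : C(ℂ, ℂ), ∀ z ∈ closedBall (0 : ℂ) 1, u (f z) = z := by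
    have hemb : Topology.IsClosedEmbedding ((closedBall (0 : ℂ) 1).domRestrict f) :=
      hf.domRestrict.isClosedEmbedding (injOn_iff_injective.1 hinj)
    obtain ⟨u, hu⟩ := ContinuousMap.exists_extension (Y := ℂ) hemb
      ⟨Subtype.val, continuous_subtype_val⟩
    exact ⟨u, fun z hz ↦ congrArg (fun g ↦ g ⟨z, hz⟩) hu⟩
  by_contra hnot
  have hp : f 0 ∈ frontier X := ⟨subset_closure (mem_image_of_mem f h0), hnot⟩
  have hune : ∀ x ∈ X, x ≠ f 0 → u x ≠ 0 := by
    rintro _ ⟨z, hz, rfl⟩ hne hzero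
    rw [hu z hz] at hzero
    exact hne (congrArg f hzero)
  obtain ⟨η, hη, hball⟩ : ∃ η > 0, ∀ y ∈ ball (f 0) η, ‖u y‖ < 1 := by
    have := Metric.continuous_iff.1 u.continuous (f 0) 1 one_pos
    simpa [hu 0 h0] using this
  obtain ⟨v, hv, hvne, hvu⟩ :=
    exists_continuousOn_ne_zero_near_of_mem_frontier hX hp u.continuous hη one_pos hune
  obtain ⟨z, hz, hzero⟩ := exists_eq_zero_of_near_id_on_sphere
    (hv.comp hf (mapsTo_image f _)) fun z hz ↦ by
      have hzb := sphere_subset_closedBall hz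
      have hfar : f z ∉ ball (f 0) η := fun h ↦ by
        have := hball _ h
        rw [hu z hzb, mem_sphere_zero_iff_norm.1 hz] at this
        exact this.false
      simpa only [hu z hzb, Function.comp_apply] using hvu (f z) ⟨mem_image_of_mem f hzb, hfar⟩
  exact hvne _ (mem_image_of_mem f hz) hzero

lemma isOpen_image_of_continuousOn_injOn {f : ℂ → ℂ} {U : Set ℂ} (hU : IsOpen U)
    (hf : ContinuousOn f U) (hinj : InjOn f U) : IsOpen (f '' U) := by
  rw [← subset_interior_iff_isOpen]
  rintro _ ⟨a, ha, rfl⟩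
  obtain ⟨r, hr, hrU⟩ := Metric.nhds_basis_closedBall.mem_iff.1 (hU.mem_nhds ha)
  have hmaps : MapsTo (fun z : ℂ ↦ a + r • z) (closedBall 0 1) U := fun z hz ↦ hrU <| by
    have hz1 : ‖z‖ ≤ 1 := mem_closedBall_zero_iff.1 hz
    simpa [norm_smul, abs_of_pos hr] using mul_le_of_le_one_right hr.le hz1
  have hscale : Function.Injective fun z : ℂ ↦ a + r • z :=
    (add_right_injective a).comp (smul_right_injective ℂ hr.ne')
  have hint := mem_interior_image_closedBall_zero_one (hf.comp (by fun_prop) hmaps)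
    (hinj.comp hscale.injOn hmaps)
  rw [image_comp] at hint
  simpa using interior_mono (image_mono hmaps.image_subset) hint

end InvarianceOfDomain

section TopologicalDisks

lemma coe_mem_interior_of_homeomorph {A B : Set ℂ} (e : A ≃ₜ B) {x : A}
    (hx : (x : ℂ) ∈ interior A) : (e x : ℂ) ∈ interior B := by
  let f : ℂ → ℂ := Function.extend Subtype.val (fun y : A ↦ (e y : ℂ)) 0
  have hfe (y : A) : f y = e y := Subtype.val_injective.extend_apply _ _ y
  have hcont : ContinuousOn f A := by
    have : A.domRestrict f = fun y ↦ (e y : ℂ) := funext hfe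
    rw [continuousOn_iff_continuous_domRestrict, this]
    fun_prop
  have hinj : InjOn f A := fun y hy z hz hyz ↦ by
    rw [hfe ⟨y, hy⟩, hfe ⟨z, hz⟩] at hyz
    exact congrArg Subtype.val (e.injective (Subtype.ext hyz))
  have hsub : f '' interior A ⊆ B := by
    rintro _ ⟨y, hy, rfl⟩
    exact hfe ⟨y, interior_subset hy⟩ ▸ Subtype.coe_prop _
  have hopen := isOpen_image_of_continuousOn_injOn isOpen_interior
    (hcont.mono interior_subset) (hinj.mono interior_subset)
  exact hfe x ▸ hopen.subset_interior_iff.2 hsub (mem_image_of_mem f hx)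

lemma coe_mem_interior_iff_of_homeomorph {A B : Set ℂ} (e : A ≃ₜ B) {x : A} :
    (e x : ℂ) ∈ interior B ↔ (x : ℂ) ∈ interior A :=
  ⟨fun h ↦ by simpa using coe_mem_interior_of_homeomorph e.symm h,
    coe_mem_interior_of_homeomorph e⟩

variable {P : Set ℂ}

lemma coe_mem_interior_iff_norm_lt_one (e : P ≃ₜ closedBall (0 : ℂ) 1) {x : P} :
    (x : ℂ) ∈ interior P ↔ ‖(e x : ℂ)‖ < 1 := by
  rw [← coe_mem_interior_iff_of_homeomorph e, interior_closedBall _ one_ne_zero,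
    mem_ball_zero_iff]

lemma exists_circle_param_frontier (hP : IsClosed P) (e : P ≃ₜ closedBall (0 : ℂ) 1) :
    ∃ γ : UnitAddCircle → ℂ, Continuous γ ∧ Function.Injective γ ∧ range γ = frontier P := by
  let φ := AddCircle.homeomorphCircle (one_ne_zero (α := ℝ))
  have hφ (t : UnitAddCircle) : (φ t : ℂ) ∈ closedBall (0 : ℂ) 1 :=
    mem_closedBall_zero_iff.2 (Circle.norm_coe _).le
  refine ⟨fun t ↦ e.symm ⟨φ t, hφ t⟩, by fun_prop, fun s t hst ↦ ?_, ?_⟩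
  · have := congrArg Subtype.val (e.symm.injective (Subtype.ext hst))
    exact φ.injective (Subtype.ext this)
  · rw [hP.frontier_eq]
    refine Subset.antisymm ?_ fun x ⟨hx, hxint⟩ ↦ ?_
    · rintro _ ⟨t, rfl⟩
      refine ⟨Subtype.coe_prop _, fun h ↦ ?_⟩
      have hlt := (coe_mem_interior_iff_norm_lt_one e).1 h
      rw [e.apply_symm_apply, Circle.norm_coe] at hlt
      exact hlt.false
    · have hle : ‖(e ⟨x, hx⟩ : ℂ)‖ ≤ 1 := mem_closedBall_zero_iff.1 (Subtype.coe_prop _)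
      have hnorm : ‖(e ⟨x, hx⟩ : ℂ)‖ = 1 :=
        hle.antisymm (not_lt.1 fun h ↦ hxint ((coe_mem_interior_iff_norm_lt_one e).2 h))
      obtain ⟨t, ht⟩ := φ.surjective ⟨e ⟨x, hx⟩, mem_sphere_zero_iff_norm.2 hnorm⟩
      have hte : (⟨φ t, hφ t⟩ : closedBall (0 : ℂ) 1) = e ⟨x, hx⟩ :=
        Subtype.ext (congrArg (fun z : Circle ↦ (z : ℂ)) ht)
      exact ⟨t, by simp only [hte, e.symm_apply_apply]⟩

lemma subset_closure_interior_of_homeomorph_closedBall (e : P ≃ₜ closedBall (0 : ℂ) 1) :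
    P ⊆ closure (interior P) := fun x hx ↦ by
  have hdense : e ⟨x, hx⟩ ∈ closure {y : closedBall (0 : ℂ) 1 | (y : ℂ) ∈ ball 0 1} := by
    rw [closure_subtype, ← preimage_ofPred_eq, ofPred_mem_eq, Subtype.image_preimage_coe,
      inter_eq_right.2 ball_subset_closedBall, closure_ball _ one_ne_zero]
    exact Subtype.coe_prop _
  have hmaps : MapsTo (fun y ↦ (e.symm y : ℂ)) {y | (y : ℂ) ∈ ball 0 1} (interior P) :=
    fun y hy ↦ (coe_mem_interior_iff_norm_lt_one e).2 (by simpa using hy)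
  simpa using map_mem_closure (by fun_prop) hdense hmaps

lemma interior_nonempty_of_homeomorph_closedBall (e : P ≃ₜ closedBall (0 : ℂ) 1) :
    (interior P).Nonempty :=
  closure_nonempty_iff.1
    ⟨e.symm 0, subset_closure_interior_of_homeomorph_closedBall e (Subtype.coe_prop _)⟩

end TopologicalDisks

section Length

variable {X : Type*} [MetricSpace X] [MeasurableSpace X] [BorelSpace X] {γ : ℝ → X} {a b : ℝ}

lemma edist_le_hausdorffMeasure_image_Ioc (hab : a ≤ b) (hγ : ContinuousOn γ (Icc a b)) :
    edist (γ a) (γ b) ≤ μH[1] (γ '' Ioc a b) := by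
  let d (x : X) : ℝ := dist x (γ a)
  have hsub : Ioc 0 (d (γ b)) ⊆ d '' (γ '' Ioc a b) := by
    have hd : ContinuousOn (fun t ↦ d (γ t)) (Icc a b) := by fun_prop
    simpa only [d, dist_self, image_image] using intermediate_value_Ioc hab hd
  calc edist (γ a) (γ b) = volume (Ioc 0 (d (γ b))) := by
        rw [Real.volume_Ioc, sub_zero, edist_comm, edist_dist]
    _ ≤ μH[1] (d '' (γ '' Ioc a b)) := by
        rw [hausdorffMeasure_real]
        exact measure_mono hsub
    _ ≤ μH[1] (γ '' Ioc a b) := by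
        simpa using (LipschitzWith.dist_left (γ a)).hausdorffMeasure_image_le zero_le_one
          (γ '' Ioc a b)

lemma eVariationOn_le_hausdorffMeasure_image_Ioc (hγ : ContinuousOn γ (Icc a b))
    (hinj : InjOn γ (Ioc a b)) : eVariationOn γ (Icc a b) ≤ μH[1] (γ '' Ioc a b) := by
  refine iSup_le ?_
  rintro ⟨n, u, hu, hmem⟩
  have hIcc (i : ℕ) : Icc (u i) (u (i + 1)) ⊆ Icc a b :=
    Icc_subset_Icc (hmem i).1 (hmem (i + 1)).2
  have hIoc (i : ℕ) : Ioc (u i) (u (i + 1)) ⊆ Ioc a b :=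
    Ioc_subset_Ioc (hmem i).1 (hmem (i + 1)).2
  have hdisj : Pairwise (Function.onFun Disjoint fun i ↦ γ '' Ioc (u i) (u (i + 1))) :=
    fun i j hij ↦ (hu.pairwise_disjoint_on_Ioc_succ hij).image hinj (hIoc i) (hIoc j)
  calc ∑ i ∈ Finset.range n, edist (γ (u (i + 1))) (γ (u i))
      ≤ ∑ i ∈ Finset.range n, μH[1] (γ '' Ioc (u i) (u (i + 1))) :=
        Finset.sum_le_sum fun i _ ↦ edist_comm (γ (u i)) _ ▸
          edist_le_hausdorffMeasure_image_Ioc (hu i.le_succ) (hγ.mono (hIcc i))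
    _ = μH[1] (⋃ i ∈ Finset.range n, γ '' Ioc (u i) (u (i + 1))) :=
        (measure_biUnion_finset (hdisj.set_pairwise _) fun i _ ↦
          measurableSet_Ioc.image_of_continuousOn_injOn
            (hγ.mono ((hIoc i).trans Ioc_subset_Icc_self)) (hinj.mono (hIoc i))).symm
    _ ≤ μH[1] (γ '' Ioc a b) := measure_mono (iUnion₂_subset fun i _ ↦ image_mono (hIoc i))

end Length

/-- `JoinedBy G x y L`: the points `x` and `y` are joined by a path inside `G`, parametrized by
`[0, 1]`, of length at most `L`. -/
def JoinedBy {X : Type*} [PseudoEMetricSpace X] (G : Set X) (x y : X) (L : ℝ≥0∞) : Prop :=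
  ∃ γ : ℝ → X, ContinuousOn γ (Icc 0 1) ∧ γ 0 = x ∧ γ 1 = y ∧
    γ '' Icc 0 1 ⊆ G ∧ eVariationOn γ (Icc 0 1) ≤ L

namespace JoinedBy

variable {X : Type*} [PseudoEMetricSpace X] {G G' : Set X} {x y z : X} {L M : ℝ≥0∞}

lemma of_Icc {γ : ℝ → X} {a b : ℝ} (hab : a ≤ b) (hγ : ContinuousOn γ (Icc a b))
    (hG : γ '' Icc a b ⊆ G) (hL : eVariationOn γ (Icc a b) ≤ L) :
    JoinedBy G (γ a) (γ b) L := by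
  have hmaps : MapsTo (fun t : ℝ ↦ a + t * (b - a)) (Icc 0 1) (Icc a b) := fun t ht ↦ by
    constructor <;> nlinarith [ht.1, ht.2]
  have hmono : MonotoneOn (fun t : ℝ ↦ a + t * (b - a)) (Icc 0 1) := fun s _ t _ hst ↦ by
    have := sub_nonneg.2 hab
    dsimp only
    gcongr
  refine ⟨fun t ↦ γ (a + t * (b - a)), hγ.comp (by fun_prop) hmaps, by simp, by simp, ?_,
    (eVariationOn.comp_le_of_monotoneOn γ _ hmono hmaps).trans hL⟩
  rintro _ ⟨t, ht, rfl⟩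
  exact hG ⟨_, hmaps ht, rfl⟩

lemma symm (h : JoinedBy G x y L) : JoinedBy G y x L := by
  obtain ⟨γ, hγ, rfl, rfl, hG, hL⟩ := h
  have hmaps : MapsTo (fun t : ℝ ↦ 1 - t) (Icc 0 1) (Icc 0 1) := fun t ht ↦ by
    constructor <;> linarith [ht.1, ht.2]
  have hanti : AntitoneOn (fun t : ℝ ↦ 1 - t) (Icc 0 1) := fun s _ t _ hst ↦ by
    dsimp only
    gcongr
  refine ⟨fun t ↦ γ (1 - t), hγ.comp (by fun_prop) hmaps, by simp, by simp, ?_,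
    (eVariationOn.comp_le_of_antitoneOn γ _ hanti hmaps).trans hL⟩
  rintro _ ⟨t, ht, rfl⟩
  exact hG ⟨_, hmaps ht, rfl⟩

lemma mono (h : JoinedBy G x y L) (hG : G ⊆ G') (hL : L ≤ M) : JoinedBy G' x y M := by
  obtain ⟨γ, hγ, h0, h1, hγG, hγL⟩ := h
  exact ⟨γ, hγ, h0, h1, hγG.trans hG, hγL.trans hL⟩

lemma edist_le (h : JoinedBy G x y L) : edist x y ≤ L := by
  obtain ⟨γ, -, rfl, rfl, -, hL⟩ := h
  exact (eVariationOn.edist_le γ (by simp) (by simp)).trans hL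

lemma trans (h : JoinedBy G x y L) (h' : JoinedBy G y z M) : JoinedBy G x z (L + M) := by
  obtain ⟨γ, hγ, rfl, rfl, hγG, hγL⟩ := h
  obtain ⟨δ, hδ, h0, rfl, hδG, hδL⟩ := h'
  let η (t : ℝ) : X := if t ≤ 1 then γ t else δ (t - 1)
  have hηγ : EqOn η γ (Icc 0 1) := fun t ht ↦ if_pos ht.2
  have hηδ : EqOn η (fun t ↦ δ (t - 1)) (Icc 1 2) := fun t ht ↦ by
    rcases ht.1.eq_or_lt with rfl | hlt
    · simp [η, h0]
    · exact if_neg hlt.not_ge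
  have hmaps : MapsTo (fun t : ℝ ↦ t - 1) (Icc 1 2) (Icc 0 1) := fun t ht ↦ by
    constructor <;> linarith [ht.1, ht.2]
  have hmono : MonotoneOn (fun t : ℝ ↦ t - 1) (Icc 1 2) := fun s _ t _ hst ↦ by
    dsimp only
    gcongr
  have hη0 : η 0 = γ 0 := hηγ (by simp)
  have hη2 : η 2 = δ 1 := (hηδ (by simp)).trans (by norm_num)
  have hIcc : Icc (0 : ℝ) 1 ∪ Icc 1 2 = Icc 0 2 :=
    Icc_union_Icc_eq_Icc zero_le_one one_le_two
  rw [← hη0, ← hη2]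
  refine of_Icc zero_le_two ?_ ?_ ?_
  · rw [← hIcc]
    exact (hγ.congr hηγ).union_of_isClosed ((hδ.comp (by fun_prop) hmaps).congr hηδ)
      isClosed_Icc isClosed_Icc
  · rw [← hIcc, image_union, hηγ.image_eq, hηδ.image_eq, ← image_image δ]
    exact union_subset hγG ((image_mono hmaps.image_subset).trans hδG)
  · have hadd := eVariationOn.Icc_add_Icc η zero_le_one one_le_two (mem_univ (1 : ℝ))
    simp only [univ_inter] at hadd
    rw [← hadd, eVariationOn.eq_of_eqOn hηγ, eVariationOn.eq_of_eqOn hηδ]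
    exact add_le_add hγL ((eVariationOn.comp_le_of_monotoneOn δ _ hmono hmaps).trans hδL)

lemma of_segment_subset {E : Type*} [SeminormedAddCommGroup E] [NormedSpace ℝ E] {G : Set E}
    {x y : E} (hG : segment ℝ x y ⊆ G) : JoinedBy G x y (edist x y) := by
  refine ⟨AffineMap.lineMap x y, (lipschitzWith_lineMap x y).continuous.continuousOn, by simp,
    by simp, (segment_eq_image_lineMap ℝ x y).symm.trans_subset hG, ?_⟩
  have hid : eVariationOn (id : ℝ → ℝ) (Icc 0 1) ≤ 1 := by simp
  calc eVariationOn (AffineMap.lineMap x y) (Icc (0 : ℝ) 1)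
      ≤ nndist x y * eVariationOn (id : ℝ → ℝ) (Icc 0 1) :=
        ((lipschitzWith_lineMap x y).lipschitzOnWith (s := univ)).comp_eVariationOn_le
          (mapsTo_univ _ _)
    _ ≤ edist x y := by
        rw [edist_nndist]
        exact mul_le_of_le_one_right' hid

end JoinedBy

lemma joinedBy_half_hausdorffMeasure_of_circle {X : Type*} [MetricSpace X] [MeasurableSpace X]
    [BorelSpace X] {γ : UnitAddCircle → X} (hγ : Continuous γ) (hinj : Function.Injective γ)
    {x y : X} (hx : x ∈ range γ) (hy : y ∈ range γ) :
    JoinedBy (range γ) x y (μH[1] (range γ) / 2) := by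
  let c (t : ℝ) : X := γ t
  have hc : Continuous c := hγ.comp (AddCircle.continuous_mk' 1)
  have hperiod (t : ℝ) : c (t + 1) = c t := congrArg γ (AddCircle.coe_add_period 1 t)
  have hrange (s : Set ℝ) : c '' s ⊆ range γ := image_subset_iff.2 fun t _ ↦ mem_range_self _
  obtain ⟨a, rfl⟩ : ∃ a, c a = x := by
    obtain ⟨θ, rfl⟩ := hx
    obtain ⟨a, rfl⟩ := QuotientAddGroup.mk_surjective θ
    exact ⟨a, rfl⟩
  obtain ⟨b, ⟨hab, hba⟩, rfl⟩ : ∃ b ∈ Ico a (a + 1), c b = y := by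
    obtain ⟨θ, rfl⟩ := hy
    obtain ⟨b, hb, rfl⟩ := (AddCircle.coe_image_Ico_eq (1 : ℝ) a).symm ▸ mem_univ θ
    exact ⟨b, hb, rfl⟩
  have hcinj : InjOn c (Ioc a (a + 1)) := fun s hs t ht hst ↦
    (AddCircle.coe_eq_coe_iff_of_mem_Ioc hs ht).1 (hinj hst)
  have hsum : eVariationOn c (Icc a b) + eVariationOn c (Icc b (a + 1)) ≤ μH[1] (range γ) := by
    have hadd := eVariationOn.Icc_add_Icc c hab hba.le (mem_univ b)
    simp only [univ_inter] at hadd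
    exact hadd ▸ (eVariationOn_le_hausdorffMeasure_image_Ioc hc.continuousOn hcinj).trans
      (measure_mono (hrange _))
  have hforth := JoinedBy.of_Icc hab hc.continuousOn (hrange _) le_rfl
  have hback := JoinedBy.of_Icc hba.le hc.continuousOn (hrange _) le_rfl
  rw [hperiod] at hback
  rcases le_total (eVariationOn c (Icc a b)) (eVariationOn c (Icc b (a + 1))) with hle | hle
  · refine hforth.mono subset_rfl ?_
    rw [ENNReal.le_div_iff_mul_le (by simp) (by simp), mul_two]
    exact (add_le_add_right hle _).trans hsum
  · refine hback.symm.mono subset_rfl ?_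
    rw [ENNReal.le_div_iff_mul_le (by simp) (by simp), mul_two]
    exact (add_le_add_left hle _).trans hsum

section Chords

lemma subset_interior_of_isPreconnected {X : Type*} [TopologicalSpace X] {s A : Set X}
    (hs : IsPreconnected s) (hmeet : (s ∩ A).Nonempty) (hdisj : Disjoint s (frontier A)) :
    s ⊆ interior A := by
  have hcover : s ⊆ interior A ∪ (closure A)ᶜ := fun x hx ↦ by
    by_contra! h
    exact hdisj.notMem_of_mem_left hx
      ⟨not_not.1 fun hxA ↦ h (Or.inr hxA), fun hxA ↦ h (Or.inl hxA)⟩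
  have hdisj' : Disjoint (interior A) (closure A)ᶜ :=
    disjoint_compl_right_iff_subset.2 interior_subset_closure
  obtain ⟨x, hxs, hxA⟩ := hmeet
  have hxint : x ∈ interior A := (hcover hxs).resolve_right fun h ↦ h (subset_closure hxA)
  exact hs.subset_left_of_subset_union isOpen_interior isClosed_closure.isOpen_compl hdisj' hcover
    ⟨x, hxs, hxint⟩

variable {E : Type*} [NormedAddCommGroup E] [NormedSpace ℝ E]

lemma exists_ray_exit {P : Set E} (hP : IsCompact P) {x u : E} (hx : x ∈ P) (hu : u ≠ 0) :
    ∃ t : ℝ, 0 ≤ t ∧ x + t • u ∈ frontier P ∧ ∀ s ∈ Icc 0 t, x + s • u ∈ P := by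
  let ray (t : ℝ) : E := x + t • u
  have hray : Continuous ray := by fun_prop
  let T : Set ℝ := Ici 0 ∩ ray ⁻¹' (interior P)ᶜ
  have hT : IsClosed T := isClosed_Ici.inter (isOpen_interior.isClosed_compl.preimage hray)
  have hTne : T.Nonempty := by
    obtain ⟨R, hR, hPR⟩ := hP.isBounded.subset_ball_lt 0 x
    refine ⟨R / ‖u‖, by simp only [mem_Ici]; positivity, fun h ↦ ?_⟩
    have := hPR (interior_subset h)
    simp [ray, norm_smul, abs_of_pos hR, hu] at this
  have hTbdd : BddBelow T := ⟨0, fun t ht ↦ ht.1⟩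
  obtain ⟨h0, hexit⟩ : sInf T ∈ T := hT.csInf_mem hTne hTbdd
  have hIcc : ∀ s ∈ Icc 0 (sInf T), ray s ∈ P := by
    rcases (mem_Ici.1 h0).eq_or_lt with hzero | hpos
    · simpa [← hzero, ray] using hx
    · have hIco : Ico 0 (sInf T) ⊆ ray ⁻¹' P := fun s hs ↦
        interior_subset (s := P) (not_not.1 fun h ↦ notMem_of_lt_csInf hs.2 hTbdd ⟨hs.1, h⟩)
      rw [← closure_Ico hpos.ne]
      exact closure_minimal hIco (hP.isClosed.preimage hray)
  exact ⟨sInf T, h0, ⟨subset_closure (hIcc _ (right_mem_Icc.2 h0)), hexit⟩, hIcc⟩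

lemma exists_chord {P : Set E} (hP : IsCompact P) {x u : E} (hx : x ∈ P) (hu : u ≠ 0) :
    ∃ a ∈ frontier P, ∃ b ∈ frontier P, x ∈ segment ℝ a b ∧
      segment ℝ a b ⊆ {z ∈ P | ∃ t : ℝ, z = x + t • u} := by
  obtain ⟨s, hs, hfs, hPs⟩ := exists_ray_exit hP hx (neg_ne_zero.2 hu)
  obtain ⟨t, ht, hft, hPt⟩ := exists_ray_exit hP hx hu
  have hst : -s ≤ t := by linarith
  have hchord : segment ℝ (x + s • -u) (x + t • u) = (fun r : ℝ ↦ x + r • u) '' Icc (-s) t := by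
    have hline (r : ℝ) : AffineMap.lineMap x (x + u) r = x + r • u := by
      simp [AffineMap.lineMap_apply, add_comm]
    have himage := image_segment ℝ (AffineMap.lineMap x (x + u) : ℝ →ᵃ[ℝ] E) (-s) t
    simpa only [segment_eq_Icc hst, hline, smul_neg, neg_smul] using himage.symm
  refine ⟨_, hfs, _, hft, ?_, ?_⟩ <;> rw [hchord]
  · exact ⟨0, ⟨by linarith, ht⟩, by simp⟩
  · rintro _ ⟨r, hr, rfl⟩
    refine ⟨?_, r, rfl⟩
    rcases le_total 0 r with h | h
    · exact hPt r ⟨h, hr.2⟩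
    · simpa using hPs (-r) ⟨by linarith, by linarith [hr.1]⟩

lemma edist_add_edist_of_mem_segment {a b x : E} (hx : x ∈ segment ℝ a b) :
    edist a x + edist x b = edist a b := by
  simp only [edist_dist]
  rw [← ENNReal.ofReal_add dist_nonneg dist_nonneg, dist_add_dist_of_mem_segment hx]

lemma exists_joinedBy_quarter_of_chord {F G : Set E} {L : ℝ≥0∞}
    (hF : ∀ a ∈ F, ∀ b ∈ F, JoinedBy F a b (L / 2)) {a b x : E} (ha : a ∈ F) (hb : b ∈ F)
    (hx : x ∈ segment ℝ a b) (hG : segment ℝ a b ⊆ G) : ∃ c ∈ F, JoinedBy G x c (L / 2 / 2) := by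
  have hsum : edist a x + edist x b ≤ L / 2 :=
    (edist_add_edist_of_mem_segment hx).trans_le (hF a ha b hb).edist_le
  have hxa : segment ℝ x a ⊆ G :=
    ((convex_segment a b).segment_subset hx (left_mem_segment ℝ a b)).trans hG
  have hxb : segment ℝ x b ⊆ G :=
    ((convex_segment a b).segment_subset hx (right_mem_segment ℝ a b)).trans hG
  rcases le_total (edist a x) (edist x b) with hle | hle
  · refine ⟨a, ha, (JoinedBy.of_segment_subset hxa).mono subset_rfl ?_⟩
    rw [ENNReal.le_div_iff_mul_le (by simp) (by simp), mul_two, edist_comm]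
    exact (add_le_add_right hle _).trans hsum
  · refine ⟨b, hb, (JoinedBy.of_segment_subset hxb).mono subset_rfl ?_⟩
    rw [ENNReal.le_div_iff_mul_le (by simp) (by simp), mul_two]
    exact (add_le_add_left hle _).trans hsum

lemma joinedBy_of_chords {F G : Set E} {L : ℝ≥0∞} (hFG : F ⊆ G)
    (hF : ∀ a ∈ F, ∀ b ∈ F, JoinedBy F a b (L / 2))
    (hG : ∀ x ∈ G, ∃ a ∈ F, ∃ b ∈ F, x ∈ segment ℝ a b ∧ segment ℝ a b ⊆ G) :
    ∀ x ∈ G, ∀ y ∈ G, JoinedBy G x y L := by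
  have hquarter : ∀ x ∈ G, ∃ c ∈ F, JoinedBy G x c (L / 2 / 2) := fun x hx ↦ by
    obtain ⟨a, ha, b, hb, hxab, habG⟩ := hG x hx
    exact exists_joinedBy_quarter_of_chord hF ha hb hxab habG
  intro x hx y hy
  obtain ⟨c, hc, hxc⟩ := hquarter x hx
  obtain ⟨d, hd, hyd⟩ := hquarter y hy
  have hcd : JoinedBy G c d (L / 2) := (hF c hc d hd).mono hFG le_rfl
  refine ((hxc.trans hcd).trans hyd.symm).mono subset_rfl (le_of_eq ?_)
  rw [add_right_comm, ENNReal.add_halves, ENNReal.add_halves]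

end Chords

section ConvexPerimeter

variable {E : Type*} [NormedAddCommGroup E] [InnerProductSpace ℝ E]

lemma exists_supporting_normal [CompleteSpace E] {C : Set E} (hC : Convex ℝ C)
    (hint : (interior C).Nonempty) {x : E} (hx : x ∉ interior C) :
    ∃ u : E, u ≠ 0 ∧ ∀ y ∈ C, inner ℝ u (y - x) ≤ 0 := by
  obtain ⟨f, hf⟩ := geometric_hahn_banach_open_point hC.interior isOpen_interior hx
  have hfu (y : E) : inner ℝ ((InnerProductSpace.toDual ℝ E).symm f) y = f y :=
    InnerProductSpace.toDual_symm_apply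
  refine ⟨(InnerProductSpace.toDual ℝ E).symm f, ?_, fun y hy ↦ ?_⟩
  · obtain ⟨a, ha⟩ := hint
    intro hzero
    have hfa := hf a ha
    simp [← hfu, hzero] at hfa
  · have hclosure : closure (interior C) ⊆ {y | f y ≤ f x} :=
      closure_minimal (fun a ha ↦ (hf a ha).le) (isClosed_le f.continuous continuous_const)
    rw [hfu, map_sub, sub_nonpos]
    exact hclosure (hC.closure_interior_eq_closure_of_nonempty_interior hint ▸ subset_closure hy)

lemma norm_sub_le_norm_add_smul_sub_add_smul {x y u v : E} {s t : ℝ} (hs : 0 ≤ s) (ht : 0 ≤ t)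
    (hu : inner ℝ u (y - x) ≤ 0) (hv : inner ℝ v (x - y) ≤ 0) :
    ‖x - y‖ ≤ ‖(x + s • u) - (y + t • v)‖ := by
  have hcross : 0 ≤ inner ℝ (x - y) (s • u - t • v) := by
    rw [inner_sub_right, real_inner_smul_right, real_inner_smul_right, real_inner_comm,
      real_inner_comm v]
    rw [← neg_sub x y, inner_neg_right] at hu
    nlinarith [mul_nonneg hs (neg_nonneg.2 hu)]
  have hsplit : (x + s • u) - (y + t • v) = (x - y) + (s • u - t • v) := by abel
  rw [hsplit, ← sq_le_sq₀ (norm_nonneg _) (norm_nonneg _), norm_add_sq_real]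
  nlinarith [sq_nonneg ‖s • u - t • v‖]

lemma hausdorffMeasure_frontier_mono_of_convex [CompleteSpace E] [MeasurableSpace E]
    [BorelSpace E] {C Q : Set E} (hC : Convex ℝ C) (hCc : IsClosed C) (hint : (interior C).Nonempty)
    (hCQ : C ⊆ Q) (hQ : IsCompact Q) {d : ℝ} (hd : 0 ≤ d) :
    μH[d] (frontier C) ≤ μH[d] (frontier Q) := by
  have hpush (x : frontier C) : ∃ u : E, ∃ t : ℝ, 0 ≤ t ∧ (∀ y ∈ C, inner ℝ u (y - x) ≤ 0) ∧
      (x : E) + t • u ∈ frontier Q := by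
    obtain ⟨u, hu, hsupp⟩ := exists_supporting_normal hC hint x.2.2
    obtain ⟨t, ht, hexit, -⟩ := exists_ray_exit hQ (hCQ (hCc.frontier_subset x.2)) hu
    exact ⟨u, t, ht, hsupp, hexit⟩
  choose u t ht hsupp hexit using hpush
  let Φ (x : frontier C) : E := x + t x • u x
  have hΦ : AntilipschitzWith 1 Φ := AntilipschitzWith.of_le_mul_dist fun x y ↦ by
    rw [NNReal.coe_one, one_mul, Subtype.dist_eq, dist_eq_norm, dist_eq_norm]
    exact norm_sub_le_norm_add_smul_sub_add_smul (ht x) (ht y)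
      (hsupp x y (hCc.frontier_subset y.2)) (hsupp y x (hCc.frontier_subset x.2))
  have hcoe : Isometry ((↑) : frontier C → E) := isometry_subtype_coe
  calc μH[d] (frontier C) = μH[d] (univ : Set (frontier C)) := by
        rw [← hcoe.hausdorffMeasure_image (Or.inl hd), image_univ, Subtype.range_coe]
    _ ≤ μH[d] (Φ '' univ) := by simpa using hΦ.le_hausdorffMeasure_image hd univ
    _ ≤ μH[d] (frontier Q) := measure_mono (image_subset_iff.2 fun x _ ↦ hexit x)

end ConvexPerimeter

section Segments

variable {E : Type*} [NormedAddCommGroup E] [NormedSpace ℝ E]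

lemma segment_subset_of_mem_openSegment {f : E →ᵃ[ℝ] ℝ} {a b z : E} (ha : 0 ≤ f a) (hb : 0 ≤ f b)
    (hz : z ∈ openSegment ℝ a b) (hfz : f z = 0) : segment ℝ a b ⊆ f ⁻¹' {0} := by
  obtain ⟨s, t, hs, ht, hst, rfl⟩ := hz
  rw [Convex.combo_affine_apply hst, smul_eq_mul, smul_eq_mul] at hfz
  have hfa : f a = 0 := by nlinarith [mul_nonneg ht.le hb]
  have hfb : f b = 0 := by nlinarith [mul_nonneg hs.le ha]
  exact ((convex_singleton 0).affine_preimage f).segment_subset hfa hfb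

lemma exists_eq_segment_of_collinear {S : Set E} (hS : IsCompact S) (hconv : Convex ℝ S)
    (hne : S.Nonempty) (hcol : Collinear ℝ S) : ∃ a b, S = segment ℝ a b := by
  obtain ⟨⟨a, b⟩, ⟨ha, hb⟩, hmax⟩ := (hS.prod hS).exists_isMaxOn (hne.prod hne)
    (continuous_dist (α := E)).continuousOn
  have hdist {x y : E} (hx : x ∈ S) (hy : y ∈ S) : dist x y ≤ dist a b := hmax (mk_mem_prod hx hy)
  refine ⟨a, b, subset_antisymm (fun z hz ↦ ?_) (hconv.segment_subset ha hb)⟩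
  have hcol' : Collinear ℝ {a, z, b} :=
    hcol.subset (insert_subset ha (insert_subset hz (singleton_subset_iff.2 hb)))
  rcases hcol'.wbtw_or_wbtw_or_wbtw with h | h | h
  · exact h.mem_segment
  · have hzb : dist z b ≤ 0 := by
      linarith [h.dist_add_dist, hdist ha hz, dist_comm z a, dist_comm b a]
    exact dist_le_zero.1 hzb ▸ right_mem_segment ℝ a b
  · have haz : dist a z ≤ 0 := by linarith [h.dist_add_dist, hdist hb hz, dist_comm b a]
    exact dist_le_zero.1 haz ▸ left_mem_segment ℝ a b

lemma collinear_preimage_singleton (hE : Module.finrank ℝ E = 2) {f : E →ᵃ[ℝ] ℝ}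
    (hf : f.linear ≠ 0) (c : ℝ) : Collinear ℝ (f ⁻¹' {c}) := by
  have : FiniteDimensional ℝ E := Module.finite_of_finrank_eq_succ hE
  have hspan : vectorSpan ℝ (f ⁻¹' {c}) ≤ LinearMap.ker f.linear := by
    refine Submodule.span_le.2 ?_
    rintro _ ⟨x, hx, y, hy, rfl⟩
    rw [mem_preimage, mem_singleton_iff] at hx hy
    rw [SetLike.mem_coe, LinearMap.mem_ker, f.linearMap_vsub, hx, hy, vsub_self]
  have hker := Module.Dual.finrank_ker_add_one_of_ne_zero (f := f.linear) hf
  exact collinear_iff_finrank_le_one.2 ((Submodule.finrank_mono hspan).trans (by omega))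

end Segments

section Cells

variable {E J : Type*} [NormedAddCommGroup E] [NormedSpace ℝ E] {p : J → E →ᵃ[ℝ] ℝ}

/-- The open polyhedral cell on which all the affine functionals `p j` are positive. -/
def openCell (p : J → E →ᵃ[ℝ] ℝ) : Set E := {z | ∀ j, 0 < p j z}

/-- The closed polyhedral cell on which all the affine functionals `p j` are nonnegative. -/
def closedCell (p : J → E →ᵃ[ℝ] ℝ) : Set E := {z | ∀ j, 0 ≤ p j z}

/-- The face of `closedCell p` cut out by the functional `p j`. It may be empty or a vertex. -/
def cellFace (p : J → E →ᵃ[ℝ] ℝ) (j : J) : Set E := closedCell p ∩ p j ⁻¹' {0}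

lemma openCell_subset_closedCell : openCell p ⊆ closedCell p := fun _ hz j ↦ (hz j).le

lemma convex_openCell : Convex ℝ (openCell p) := by
  have h : openCell p = ⋂ j, p j ⁻¹' Ioi 0 := by ext; simp [openCell]
  exact h ▸ convex_iInter fun j ↦ (convex_Ioi 0).affine_preimage (p j)

lemma convex_closedCell : Convex ℝ (closedCell p) := by
  have h : closedCell p = ⋂ j, p j ⁻¹' Ici 0 := by ext; simp [closedCell]
  exact h ▸ convex_iInter fun j ↦ (convex_Ici 0).affine_preimage (p j)

lemma convex_cellFace (j : J) : Convex ℝ (cellFace p j) :=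
  convex_closedCell.inter ((convex_singleton 0).affine_preimage (p j))

lemma linear_ne_zero_of_cellFace_nonempty (hp : (openCell p).Nonempty) {j : J}
    (hj : (cellFace p j).Nonempty) : (p j).linear ≠ 0 := by
  rw [Ne, AffineMap.linear_eq_zero_iff_exists_const]
  rintro ⟨c, hc⟩
  obtain ⟨o, ho⟩ := hp
  obtain ⟨z, -, hz⟩ := hj
  have hpos := ho j
  rw [hc] at hpos hz
  exact hpos.ne' hz

lemma cellFace_subset_of_openSegment_inter {i j : J} {a b a' b' : E}
    (hi : cellFace p i = segment ℝ a b) (hj : cellFace p j = segment ℝ a' b')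
    (hmeet : (openSegment ℝ a b ∩ openSegment ℝ a' b').Nonempty) :
    cellFace p i ⊆ cellFace p j := by
  obtain ⟨z, hz, hz'⟩ := hmeet
  have hzj : z ∈ cellFace p j := hj ▸ openSegment_subset_segment ℝ a' b' hz'
  have ha : a ∈ cellFace p i := hi ▸ left_mem_segment ℝ a b
  have hb : b ∈ cellFace p i := hi ▸ right_mem_segment ℝ a b
  exact subset_inter inter_subset_left
    (hi ▸ segment_subset_of_mem_openSegment (ha.1 j) (hb.1 j) hz hzj.2)

variable [FiniteDimensional ℝ E]

lemma isOpen_openCell [Finite J] : IsOpen (openCell p) := by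
  have h : openCell p = ⋂ j, p j ⁻¹' Ioi 0 := by ext; simp [openCell]
  exact h ▸ isOpen_iInter_of_finite fun j ↦
    isOpen_Ioi.preimage (p j).continuous_of_finiteDimensional

lemma isClosed_closedCell : IsClosed (closedCell p) := by
  have h : closedCell p = ⋂ j, p j ⁻¹' Ici 0 := by ext; simp [closedCell]
  exact h ▸ isClosed_iInter fun j ↦ isClosed_Ici.preimage (p j).continuous_of_finiteDimensional

lemma isCompact_cellFace (hC : IsCompact (closedCell p)) (j : J) : IsCompact (cellFace p j) :=
  hC.inter_right (isClosed_singleton.preimage (p j).continuous_of_finiteDimensional)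

lemma closure_openCell (hp : (openCell p).Nonempty) : closure (openCell p) = closedCell p := by
  refine (closure_minimal openCell_subset_closedCell isClosed_closedCell).antisymm fun z hz ↦ ?_
  obtain ⟨o, ho⟩ := hp
  have hsub : openSegment ℝ o z ⊆ openCell p := by
    rintro _ ⟨s, t, hs, ht, hst, rfl⟩ j
    rw [Convex.combo_affine_apply hst, smul_eq_mul, smul_eq_mul]
    have := mul_pos hs (ho j)
    have := mul_nonneg ht.le (hz j)
    linarith
  exact closure_mono hsub (closure_openSegment (𝕜 := ℝ) o z ▸ right_mem_segment ℝ o z)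

lemma interior_closedCell [Finite J] (hp : (openCell p).Nonempty) :
    interior (closedCell p) = openCell p := by
  rw [← closure_openCell hp, convex_openCell.interior_closure_eq_interior_of_nonempty_interior,
    isOpen_openCell.interior_eq]
  rwa [isOpen_openCell.interior_eq]

lemma frontier_closedCell [Finite J] (hp : (openCell p).Nonempty) :
    frontier (closedCell p) = ⋃ j, cellFace p j := by
  rw [isClosed_closedCell.frontier_eq, interior_closedCell hp]
  ext z
  simp only [mem_sdiff, openCell, mem_ofPred_eq, not_forall, not_lt, mem_iUnion, cellFace,
    mem_inter_iff, mem_preimage, mem_singleton_iff, ← exists_and_left]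
  exact exists_congr fun j ↦ and_congr_right fun hz ↦ ⟨fun h ↦ h.antisymm (hz j), fun h ↦ h.le⟩

lemma exists_cellFace_eq_segment (hE : Module.finrank ℝ E = 2) (hp : (openCell p).Nonempty)
    (hC : IsCompact (closedCell p)) {j : J} (hj : (cellFace p j).Nonempty) :
    ∃ a b, cellFace p j = segment ℝ a b :=
  exists_eq_segment_of_collinear (isCompact_cellFace hC j) (convex_cellFace j) hj
    ((collinear_preimage_singleton hE (linear_ne_zero_of_cellFace_nonempty hp hj) 0).subset
      inter_subset_right)

end Cells

section PolygonalCells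

lemma subset_of_subset_union_finite_of_preperfect {X : Type*} [TopologicalSpace X] [T1Space X]
    {S U V : Set X} (hS : Preperfect S) (hU : IsClosed U) (hV : V.Finite) (hcover : S ⊆ U ∪ V) :
    S ⊆ U := fun x hx ↦ by
  by_contra hxU
  have hnhds : (U ∪ V \ {x})ᶜ ∈ nhds x :=
    (hU.union (hV.subset sdiff_subset).isClosed).isOpen_compl.mem_nhds (by simp [hxU])
  obtain ⟨y, ⟨hy, hyS⟩, hyx⟩ := accPt_iff_nhds.1 (hS x hx) _ hnhds
  exact hy ((hcover hyS).imp_right fun h ↦ ⟨h, hyx⟩)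

variable {E : Type*} [NormedAddCommGroup E] [NormedSpace ℝ E]

lemma preperfect_frontier_of_convex (hE : 1 < Module.rank ℝ E) {C : Set E} (hC : Convex ℝ C)
    (hint : (interior C).Nonempty) (hb : Bornology.IsBounded C) : Preperfect (frontier C) := by
  have : Nontrivial E := (rank_pos_iff_nontrivial (R := ℝ)).1 (zero_lt_one.trans hE)
  have : IsAddTorsionFree E := .of_isTorsionFree ℝ E
  obtain ⟨h, -, -, hfr⟩ :=
    exists_homeomorph_image_interior_closure_frontier_eq_unitBall hC hint hb
  have hfrontier : frontier C = h.symm '' sphere 0 1 := by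
    rw [← hfr, ← image_comp, h.symm_comp_self, image_id]
  obtain ⟨v, hv⟩ := NormedSpace.sphere_nonempty (E := E) (x := 0) (r := 1) |>.2 zero_le_one
  have hnontrivial : (sphere (0 : E) 1).Nontrivial :=
    ⟨v, hv, -v, by simpa using hv, fun heq ↦ ne_of_mem_sphere hv one_ne_zero (self_eq_neg.1 heq)⟩
  rw [hfrontier]
  exact ((isPreconnected_sphere hE 0 1).image _ h.symm.continuous.continuousOn)
    |>.preperfect_of_nontrivial (hnontrivial.image h.symm.injective)

lemma exists_finset_endpoints {𝓕 : Set (Set E)} (hfin : 𝓕.Finite)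
    (hseg : ∀ F ∈ 𝓕, ∃ a b, F = segment ℝ a b) (hnt : ∀ F ∈ 𝓕, F.Nontrivial)
    (hmeet : ∀ a b a' b', segment ℝ a b ∈ 𝓕 → segment ℝ a' b' ∈ 𝓕 →
      (openSegment ℝ a b ∩ openSegment ℝ a' b').Nonempty → segment ℝ a b = segment ℝ a' b') :
    ∃ S : Finset (E × E), (∀ e ∈ S, e.1 ≠ e.2) ∧ ⋃₀ 𝓕 = ⋃ e ∈ S, segment ℝ e.1 e.2 ∧
      ∀ e ∈ S, ∀ e' ∈ S, e ≠ e' → openSegment ℝ e.1 e.2 ∩ openSegment ℝ e'.1 e'.2 = ∅ := by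
  classical
  lift 𝓕 to Finset (Set E) using hfin
  choose! a b hab using hseg
  refine ⟨𝓕.image fun F ↦ (a F, b F), ?_, ?_, ?_⟩
  · simp only [Finset.forall_mem_image]
    intro F hF heq
    have hF' := hnt F hF
    rw [hab F hF, heq, segment_same] at hF'
    exact not_nontrivial_singleton hF'
  · rw [Finset.set_biUnion_finset_image, sUnion_eq_biUnion]
    exact iUnion₂_congr hab
  · simp only [Finset.forall_mem_image]
    intro F hF F' hF' hne
    contrapose! hne
    have heq := hmeet _ _ _ _ (hab F hF ▸ hF) (hab F' hF' ▸ hF') hne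
    rw [← hab F hF, ← hab F' hF'] at heq
    rw [heq]

variable [FiniteDimensional ℝ E] {J : Type*} [Finite J] {p : J → E →ᵃ[ℝ] ℝ}

lemma frontier_closedCell_eq_sUnion_nontrivial (hE : Module.finrank ℝ E = 2)
    (hp : (openCell p).Nonempty) (hC : IsCompact (closedCell p)) :
    frontier (closedCell p) = ⋃₀ {F ∈ range (cellFace p) | F.Nontrivial} := by
  have hface : frontier (closedCell p) = ⋃ j, cellFace p j := frontier_closedCell hp
  refine subset_antisymm ?_ ?_
  · have hperfect : Preperfect (frontier (closedCell p)) := by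
      refine preperfect_frontier_of_convex ?_ convex_closedCell ?_ hC.isBounded
      · rw [← Module.finrank_eq_rank, hE]
        norm_num
      · rwa [interior_closedCell hp]
    refine subset_of_subset_union_finite_of_preperfect hperfect
      (V := ⋃ j ∈ {j | (cellFace p j).Subsingleton}, cellFace p j) ?_ ?_ ?_
    · rw [sUnion_eq_biUnion]
      refine ((finite_range _).subset (sep_subset _ _)).isClosed_biUnion ?_
      rintro _ ⟨⟨j, rfl⟩, -⟩
      exact (isCompact_cellFace hC j).isClosed
    · exact (toFinite _).biUnion fun j hj ↦ Subsingleton.finite hj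
    · rw [hface]
      refine iUnion_subset fun j z hz ↦ ?_
      rcases (cellFace p j).subsingleton_or_nontrivial with h | h
      · exact Or.inr (mem_biUnion (t := cellFace p) h hz)
      · exact Or.inl ⟨cellFace p j, ⟨mem_range_self j, h⟩, hz⟩
  · rw [hface]
    refine sUnion_subset ?_
    rintro _ ⟨⟨j, rfl⟩, -⟩
    exact subset_iUnion _ j

lemma isPolygonalDisk_closedCell {p : J → ℂ →ᵃ[ℝ] ℝ} (hp : (openCell p).Nonempty)
    (hC : IsCompact (closedCell p)) : IsPolygonalDisk (closedCell p) := by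
  have hint : (interior (closedCell p)).Nonempty := by rwa [interior_closedCell hp]
  obtain ⟨h, -, hclosure, -⟩ := exists_homeomorph_image_interior_closure_frontier_eq_unitBall
    convex_closedCell hint hC.isBounded
  rw [isClosed_closedCell.closure_eq] at hclosure
  refine ⟨hC, ⟨(h.image (closedCell p)).trans (Homeomorph.setCongr hclosure)⟩, ?_⟩
  rw [frontier_closedCell_eq_sUnion_nontrivial Complex.finrank_real_complex hp hC]
  refine exists_finset_endpoints ((finite_range _).subset (sep_subset _ _)) ?_ ?_ ?_
  · rintro _ ⟨⟨j, rfl⟩, hj⟩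
    exact exists_cellFace_eq_segment Complex.finrank_real_complex hp hC hj.nonempty
  · exact fun F hF ↦ hF.2
  · rintro a b a' b' ⟨⟨i, hi⟩, -⟩ ⟨⟨j, hj⟩, -⟩ hmeet
    have hij := cellFace_subset_of_openSegment_inter hi hj hmeet
    have hji := cellFace_subset_of_openSegment_inter hj hi (inter_comm _ _ ▸ hmeet)
    rw [← hi, ← hj, hij.antisymm hji]

end PolygonalCells

section Arrangements

lemma exists_units_smul_pos {x : ℝ} (hx : x ≠ 0) : ∃ s : ℤˣ, 0 < s • x := by
  rcases hx.lt_or_gt with h | h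
  · exact ⟨-1, by simpa [Units.smul_def] using h⟩
  · exact ⟨1, by simpa using h⟩

lemma units_eq_of_smul_pos {x : ℝ} {s t : ℤˣ} (hs : 0 < s • x) (ht : 0 < t • x) : s = t := by
  rcases Int.units_eq_one_or s with rfl | rfl <;> rcases Int.units_eq_one_or t with rfl | rfl <;>
    simp only [Units.smul_def, Units.val_one, Units.val_neg, one_smul, neg_smul] at hs ht <;>
    first | rfl | linarith

variable {E J : Type*} [NormedAddCommGroup E] [NormedSpace ℝ E] {p q : J → E →ᵃ[ℝ] ℝ}
  {σ τ : J → ℤˣ} {P : Set E}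

/-- The union of the zero sets of the affine functionals `q j`. -/
def hyperplanes (q : J → E →ᵃ[ℝ] ℝ) : Set E := {z | ∃ j, q j z = 0}

/-- The chambers inside `P` of the arrangement of hyperplanes `q j = 0`. A chamber
`openCell (σ • q)` is encoded by the family `σ` of signs which the functionals take on it. -/
def chambers (q : J → E →ᵃ[ℝ] ℝ) (P : Set E) : Set (J → ℤˣ) :=
  {σ | (openCell (σ • q)).Nonempty ∧ openCell (σ • q) ⊆ interior P}

lemma hyperplanes_eq_iUnion : hyperplanes q = ⋃ j, q j ⁻¹' {0} := by
  ext
  simp [hyperplanes]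

lemma disjoint_openCell_hyperplanes : Disjoint (openCell p) (hyperplanes p) :=
  disjoint_left.2 fun _ hz ⟨j, hj⟩ ↦ (hz j).ne' hj

lemma closedCell_sdiff_openCell_subset_hyperplanes :
    closedCell p \ openCell p ⊆ hyperplanes p := fun z hz ↦ by
  obtain ⟨j, hj⟩ := not_forall.1 hz.2
  exact ⟨j, (not_lt.1 hj).antisymm (hz.1 j)⟩

lemma hyperplanes_smul (σ : J → ℤˣ) (q : J → E →ᵃ[ℝ] ℝ) :
    hyperplanes (σ • q) = hyperplanes q := by
  ext z
  simp [hyperplanes, smul_eq_zero_iff_eq]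

lemma exists_mem_openCell_smul {z : E} (hz : z ∉ hyperplanes q) :
    ∃ σ : J → ℤˣ, z ∈ openCell (σ • q) := by
  choose σ hσ using fun j ↦ exists_units_smul_pos fun hj : q j z = 0 ↦ hz ⟨j, hj⟩
  exact ⟨σ, hσ⟩

lemma eq_of_mem_openCell_smul {z : E} (hσ : z ∈ openCell (σ • q)) (hτ : z ∈ openCell (τ • q)) :
    σ = τ :=
  funext fun j ↦ units_eq_of_smul_pos (hσ j) (hτ j)

lemma mul_pos_of_mem_openCell_smul {z w : E} (hz : z ∈ openCell (σ • q))
    (hw : w ∈ openCell (σ • q)) (j : J) : 0 < q j z * q j w := by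
  have hpos : 0 < (σ j • q j z) * (σ j • q j w) := mul_pos (hz j) (hw j)
  rwa [smul_mul_smul_comm, Int.units_mul_self, one_smul] at hpos

lemma disjoint_openCell_smul (h : σ ≠ τ) : Disjoint (openCell (σ • q)) (openCell (τ • q)) :=
  disjoint_left.2 fun _ hσ hτ ↦ h (eq_of_mem_openCell_smul hσ hτ)

lemma mem_chambers_of_inter_nonempty (hF : frontier P ⊆ hyperplanes q)
    (hmeet : (openCell (σ • q) ∩ P).Nonempty) : σ ∈ chambers q P :=
  ⟨hmeet.left, subset_interior_of_isPreconnected convex_openCell.isPreconnected hmeet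
    (disjoint_openCell_hyperplanes.mono_right (hyperplanes_smul σ q ▸ hF))⟩

lemma exists_chord_hyperplanes (hE : 1 < Module.finrank ℝ E) (hP : IsCompact P) :
    ∀ x ∈ P ∩ hyperplanes q, ∃ a ∈ frontier P, ∃ b ∈ frontier P,
      x ∈ segment ℝ a b ∧ segment ℝ a b ⊆ P ∩ hyperplanes q := by
  rintro x ⟨hxP, j, hxj⟩
  have : FiniteDimensional ℝ E := Module.finite_of_finrank_pos (zero_lt_one.trans hE)
  obtain ⟨u, hu, hu0⟩ := Submodule.exists_mem_ne_zero_of_ne_bot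
    (LinearMap.ker_ne_bot_of_finrank_lt (f := (q j).linear) (by simpa using hE))
  obtain ⟨a, ha, b, hb, hxab, hab⟩ := exists_chord hP hxP hu0
  refine ⟨a, ha, b, hb, hxab, fun z hz ↦ ?_⟩
  obtain ⟨hzP, t, rfl⟩ := hab hz
  refine ⟨hzP, j, ?_⟩
  rw [LinearMap.mem_ker] at hu
  rw [add_comm, ← vadd_eq_add, (q j).map_vadd, map_smul, hu, smul_zero, zero_vadd, hxj]

lemma exists_affineMap_segment_subset (hE : 1 < Module.finrank ℝ E) (a b : E) :
    ∃ f : E →ᵃ[ℝ] ℝ, f.linear ≠ 0 ∧ segment ℝ a b ⊆ f ⁻¹' {0} := by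
  have : FiniteDimensional ℝ E := Module.finite_of_finrank_pos (zero_lt_one.trans hE)
  have hspan : Submodule.span ℝ {b - a} < ⊤ := by
    refine Ne.lt_top fun htop ↦ ?_
    have hcard := finrank_span_le_card (R := ℝ) {b - a}
    rw [htop, finrank_top, toFinset_singleton, Finset.card_singleton] at hcard
    omega
  obtain ⟨f, hf, hker⟩ := Submodule.exists_le_ker_of_lt_top _ hspan
  have hfab : f (b - a) = 0 := hker (Submodule.mem_span_singleton_self _)
  refine ⟨f.toAffineMap - AffineMap.const ℝ E (f a), by simpa using hf, ?_⟩
  refine ((convex_singleton 0).affine_preimage _).segment_subset ?_ ?_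
  · simp
  · simpa using hfab

variable [FiniteDimensional ℝ E]

lemma subset_openCell_of_isPreconnected [Finite J] {s : Set E} (hs : IsPreconnected s)
    (hmeet : (s ∩ openCell p).Nonempty) (hdisj : Disjoint s (hyperplanes p)) :
    s ⊆ openCell p := by
  have hfrontier : frontier (openCell p) ⊆ hyperplanes p := by
    rw [isOpen_openCell.frontier_eq, closure_openCell hmeet.right]
    exact closedCell_sdiff_openCell_subset_hyperplanes
  exact (subset_interior_of_isPreconnected hs hmeet (hdisj.mono_right hfrontier)).trans
    interior_subset

lemma isClosed_hyperplanes [Finite J] : IsClosed (hyperplanes q) :=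
  hyperplanes_eq_iUnion (q := q) ▸ isClosed_iUnion_of_finite fun j ↦
    isClosed_singleton.preimage (q j).continuous_of_finiteDimensional

lemma disjoint_interior_closedCell_smul [Finite J] (h : σ ≠ τ)
    (hσ : (openCell (σ • q)).Nonempty) (hτ : (openCell (τ • q)).Nonempty) :
    Disjoint (interior (closedCell (σ • q))) (interior (closedCell (τ • q))) := by
  rw [interior_closedCell hσ, interior_closedCell hτ]
  exact disjoint_openCell_smul h

lemma addHaar_hyperplanes [Finite J] [MeasurableSpace E] [BorelSpace E] (μ : Measure E)
    [μ.IsAddHaarMeasure] (hq : ∀ j, (q j).linear ≠ 0) : μ (hyperplanes q) = 0 := by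
  rw [hyperplanes_eq_iUnion, measure_iUnion_null_iff]
  intro j
  have hne : (affineSpan ℝ {0}).comap (q j) ≠ ⊤ := fun htop ↦ hq j <| by
    have hzero (z : E) : q j z = 0 := by
      have hz : z ∈ (affineSpan ℝ {0}).comap (q j) := htop ▸ AffineSubspace.mem_top ℝ E z
      simpa using hz
    rw [AffineMap.linear_eq_zero_iff_exists_const]
    exact ⟨0, AffineMap.ext hzero⟩
  simpa using Measure.addHaar_affineSubspace μ _ hne

lemma tendsto_measure_cthickening_inter_hyperplanes [Finite J] [MeasurableSpace E] [BorelSpace E]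
    (μ : Measure E) [μ.IsAddHaarMeasure] {K : Set E} (hK : IsCompact K)
    (hq : ∀ j, (q j).linear ≠ 0) :
    Filter.Tendsto (fun r ↦ μ (cthickening r (K ∩ hyperplanes q))) (𝓝 0) (𝓝 0) := by
  have hnull : μ (K ∩ hyperplanes q) = 0 :=
    measure_mono_null inter_subset_right (addHaar_hyperplanes μ hq)
  exact hnull ▸ tendsto_measure_cthickening_of_isCompact (hK.inter_right isClosed_hyperplanes)

lemma dense_compl_hyperplanes [Finite J] (hq : ∀ j, (q j).linear ≠ 0) :
    Dense (hyperplanes q)ᶜ := by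
  borelize E
  rw [← interior_eq_empty_iff_dense_compl]
  exact Measure.interior_eq_empty_of_null (addHaar_hyperplanes Measure.addHaar hq)

lemma closedCell_subset_of_mem_chambers (hP : IsClosed P) (hσ : σ ∈ chambers q P) :
    closedCell (σ • q) ⊆ P :=
  closure_openCell hσ.1 ▸ closure_minimal (hσ.2.trans interior_subset) hP

lemma iUnion_closedCell_chambers [Finite J] (hP : IsClosed P) (hPint : P ⊆ closure (interior P))
    (hF : frontier P ⊆ hyperplanes q) (hq : ∀ j, (q j).linear ≠ 0) :
    ⋃ σ : chambers q P, closedCell ((σ : J → ℤˣ) • q) = P := by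
  refine (iUnion_subset fun σ ↦ closedCell_subset_of_mem_chambers hP σ.2).antisymm ?_
  have hcover : interior P ∩ (hyperplanes q)ᶜ ⊆
      ⋃ σ : chambers q P, closedCell ((σ : J → ℤˣ) • q) := fun z hz ↦ by
    obtain ⟨σ, hσ⟩ := exists_mem_openCell_smul hz.2
    exact mem_iUnion.2 ⟨⟨σ, mem_chambers_of_inter_nonempty hF ⟨z, hσ, interior_subset hz.1⟩⟩,
      openCell_subset_closedCell hσ⟩
  calc P ⊆ closure (interior P ∩ (hyperplanes q)ᶜ) := hPint.trans <| closure_minimal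
        ((dense_compl_hyperplanes hq).open_subset_closure_inter isOpen_interior) isClosed_closure
    _ ⊆ ⋃ σ : chambers q P, closedCell ((σ : J → ℤˣ) • q) :=
        closure_minimal hcover (isClosed_iUnion_of_finite fun _ ↦ isClosed_closedCell)

lemma iUnion_frontier_closedCell_chambers [Finite J] (hP : IsClosed P)
    (hPint : P ⊆ closure (interior P)) (hF : frontier P ⊆ hyperplanes q)
    (hq : ∀ j, (q j).linear ≠ 0) :
    ⋃ σ : chambers q P, frontier (closedCell ((σ : J → ℤˣ) • q)) = P ∩ hyperplanes q := by
  have hfrontier (σ : chambers q P) : frontier (closedCell ((σ : J → ℤˣ) • q)) =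
      closedCell ((σ : J → ℤˣ) • q) \ openCell ((σ : J → ℤˣ) • q) := by
    rw [isClosed_closedCell.frontier_eq, interior_closedCell σ.2.1]
  refine subset_antisymm (iUnion_subset fun σ ↦ ?_) fun z ⟨hzP, hzq⟩ ↦ ?_
  · rw [hfrontier, ← hyperplanes_smul (σ : J → ℤˣ) q]
    exact subset_inter (sdiff_subset.trans (closedCell_subset_of_mem_chambers hP σ.2))
      closedCell_sdiff_openCell_subset_hyperplanes
  · rw [← iUnion_closedCell_chambers hP hPint hF hq, mem_iUnion] at hzP
    obtain ⟨σ, hσ⟩ := hzP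
    rw [← hyperplanes_smul (σ : J → ℤˣ) q] at hzq
    refine mem_iUnion.2 ⟨σ, ?_⟩
    rw [hfrontier]
    exact ⟨hσ, disjoint_openCell_hyperplanes.notMem_of_mem_right hzq⟩

end Arrangements

lemma IsPolygonalDisk.exists_frontier_subset_hyperplanes {P : Set ℂ} (hP : IsPolygonalDisk P) :
    ∃ (J : Type) (_ : Fintype J) (q : J → ℂ →ᵃ[ℝ] ℝ),
      (∀ j, (q j).linear ≠ 0) ∧ frontier P ⊆ hyperplanes q := by
  obtain ⟨-, -, S, -, hfrontier, -⟩ := hP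
  choose f hf hab using fun e : ℂ × ℂ ↦ exists_affineMap_segment_subset
    (Complex.finrank_real_complex ▸ one_lt_two) e.1 e.2
  refine ⟨S, inferInstance, fun e ↦ f e, fun e ↦ hf e, ?_⟩
  rw [hfrontier]
  exact iUnion₂_subset fun e he z hz ↦ ⟨⟨e, he⟩, hab e hz⟩

section Rectangles

open Complex

lemma volume_reProdIm {s t : Set ℝ} (hs : MeasurableSet s) (ht : MeasurableSet t) :
    volume (s ×ℂ t) = volume s * volume t := by
  rw [← Measure.prod_prod, ← Measure.volume_eq_prod,
    ← volume_preserving_equiv_real_prod.measure_preimage (hs.prod ht).nullMeasurableSet]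
  rfl

lemma convex_reProdIm {s t : Set ℝ} (hs : Convex ℝ s) (ht : Convex ℝ t) : Convex ℝ (s ×ℂ t) :=
  (hs.linear_preimage reLm).inter (ht.linear_preimage imLm)

lemma hausdorffMeasure_reProdIm_singleton (s : Set ℝ) (b : ℝ) : μH[1] (s ×ℂ {b}) = volume s := by
  have hiso : Isometry fun x : ℝ ↦ (⟨x, b⟩ : ℂ) := .of_dist_eq fun _ _ ↦ dist_of_im_eq rfl
  have himage : s ×ℂ {b} = (fun x : ℝ ↦ (⟨x, b⟩ : ℂ)) '' s := by
    ext z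
    simp [mem_reProdIm, Complex.ext_iff, eq_comm]
  rw [himage, hiso.hausdorffMeasure_image (Or.inl zero_le_one), hausdorffMeasure_real]

lemma hausdorffMeasure_singleton_reProdIm (a : ℝ) (t : Set ℝ) : μH[1] ({a} ×ℂ t) = volume t := by
  have hiso : Isometry fun y : ℝ ↦ (⟨a, y⟩ : ℂ) := .of_dist_eq fun _ _ ↦ dist_of_re_eq rfl
  have himage : {a} ×ℂ t = (fun y : ℝ ↦ (⟨a, y⟩ : ℂ)) '' t := by
    ext z
    simp [mem_reProdIm, Complex.ext_iff, eq_comm, and_comm]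
  rw [himage, hiso.hausdorffMeasure_image (Or.inl zero_le_one), hausdorffMeasure_real]

lemma hausdorffMeasure_frontier_Icc_reProdIm_Icc_le {a b l h : ℝ} (hl : 0 ≤ l) (hh : 0 ≤ h) :
    μH[1] (frontier (Icc a (a + l) ×ℂ Icc b (b + h))) ≤ ENNReal.ofReal (2 * l + 2 * h) := by
  have hcover : frontier (Icc a (a + l) ×ℂ Icc b (b + h)) ⊆
      (Icc a (a + l) ×ℂ {b} ∪ Icc a (a + l) ×ℂ {b + h}) ∪
        ({a} ×ℂ Icc b (b + h) ∪ {a + l} ×ℂ Icc b (b + h)) := by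
    rw [frontier_reProdIm, frontier_Icc (by linarith), frontier_Icc (by linarith),
      closure_Icc, closure_Icc]
    refine fun z hz ↦ ?_
    simp only [mem_union, mem_reProdIm, mem_insert_iff, mem_singleton_iff] at hz ⊢
    tauto
  calc μH[1] (frontier (Icc a (a + l) ×ℂ Icc b (b + h)))
      ≤ (ENNReal.ofReal l + ENNReal.ofReal l) + (ENNReal.ofReal h + ENNReal.ofReal h) := by
        refine (measure_mono hcover).trans ((measure_union_le _ _).trans ?_)
        refine add_le_add ((measure_union_le _ _).trans_eq ?_) ((measure_union_le _ _).trans_eq ?_)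
        · simp [hausdorffMeasure_reProdIm_singleton]
        · simp [hausdorffMeasure_singleton_reProdIm]
    _ = ENNReal.ofReal (2 * l + 2 * h) := by
        rw [← ENNReal.ofReal_add hl hl, ← ENNReal.ofReal_add hh hh,
          ← ENNReal.ofReal_add (by positivity) (by positivity), ← two_mul, ← two_mul]

end Rectangles

section Grid

open Complex

lemma exists_int_mul_lt_lt {δ x : ℝ} {N : ℕ} (hδ : 0 < δ) (hxN : |x| < N * δ)
    (hx : ∀ k : Icc (-N : ℤ) N, x ≠ k * δ) :
    ∃ m ∈ Icc (-N : ℤ) N, m + 1 ∈ Icc (-N : ℤ) N ∧ m * δ < x ∧ x < m * δ + δ := by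
  obtain ⟨hlo, hhi⟩ := abs_lt.1 hxN
  have hle : ⌊x / δ⌋ * δ ≤ x := (le_div_iff₀ hδ).1 (Int.floor_le _)
  have hlt : x < ⌊x / δ⌋ * δ + δ := by linarith [(div_lt_iff₀ hδ).1 (Int.lt_floor_add_one (x / δ))]
  have hfloor_lo : -N ≤ ⌊x / δ⌋ := Int.le_floor.2 <| (le_div_iff₀ hδ).2 <| by
    push_cast
    linarith
  have hfloor_hi : ⌊x / δ⌋ < N := Int.floor_lt.2 <| (div_lt_iff₀ hδ).2 <| by exact_mod_cast hhi
  have hmem : ⌊x / δ⌋ ∈ Icc (-N : ℤ) N := ⟨hfloor_lo, hfloor_hi.le⟩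
  exact ⟨_, hmem, ⟨by omega, by omega⟩, hle.lt_of_ne (hx ⟨_, hmem⟩).symm, hlt⟩

lemma int_mul_notMem_Ioo {δ : ℝ} (hδ : 0 < δ) (m k : ℤ) : k * δ ∉ Ioo (m * δ) (m * δ + δ) := by
  rintro ⟨hlo, hhi⟩
  rw [← add_one_mul] at hhi
  have hmk : m < k := by exact_mod_cast lt_of_mul_lt_mul_right hlo hδ.le
  have hkm : k < m + 1 := by exact_mod_cast lt_of_mul_lt_mul_right hhi hδ.le
  omega

/-- The affine functionals whose zero sets are the vertical lines `re z = k * δ` and the horizontal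
lines `im z = k * δ`, for integers `k` with `|k| ≤ N`. -/
noncomputable def grid (δ : ℝ) (N : ℕ) : Icc (-N : ℤ) N ⊕ Icc (-N : ℤ) N → ℂ →ᵃ[ℝ] ℝ :=
  Sum.elim (fun k ↦ reLm.toAffineMap - AffineMap.const ℝ ℂ (k * δ))
    fun k ↦ imLm.toAffineMap - AffineMap.const ℝ ℂ (k * δ)

variable {δ : ℝ} {N : ℕ}

@[simp]
lemma grid_inl (k : Icc (-N : ℤ) N) (z : ℂ) : grid δ N (Sum.inl k) z = z.re - k * δ := rfl

@[simp]
lemma grid_inr (k : Icc (-N : ℤ) N) (z : ℂ) : grid δ N (Sum.inr k) z = z.im - k * δ := rfl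

lemma linear_grid_ne_zero (i : Icc (-N : ℤ) N ⊕ Icc (-N : ℤ) N) : (grid δ N i).linear ≠ 0 := by
  intro h
  rcases i with k | k
  · simpa [grid] using LinearMap.congr_fun h 1
  · simpa [grid] using LinearMap.congr_fun h I

lemma exists_openCell_grid_eq {σ : Icc (-N : ℤ) N ⊕ Icc (-N : ℤ) N → ℤˣ} (hδ : 0 < δ) {z : ℂ}
    (hz : z ∈ openCell (σ • grid δ N)) (hzN : ‖z‖ < N * δ) :
    ∃ a b, openCell (σ • grid δ N) = Ioo a (a + δ) ×ℂ Ioo b (b + δ) := by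
  have hzgrid (i) : grid δ N i z ≠ 0 := mul_self_pos.1 (mul_pos_of_mem_openCell_smul hz hz i)
  obtain ⟨m, hm, hm', hmz, hzm⟩ := exists_int_mul_lt_lt hδ ((abs_re_le_norm z).trans_lt hzN)
    fun k ↦ sub_ne_zero.1 (hzgrid (Sum.inl k))
  obtain ⟨n, hn, hn', hnz, hzn⟩ := exists_int_mul_lt_lt hδ ((abs_im_le_norm z).trans_lt hzN)
    fun k ↦ sub_ne_zero.1 (hzgrid (Sum.inr k))
  refine ⟨m * δ, n * δ, subset_antisymm (fun w hw ↦ ?_) ?_⟩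
  · have hsign := mul_pos_of_mem_openCell_smul hz hw
    have hre := (pos_iff_pos_of_mul_pos (hsign (Sum.inl ⟨m, hm⟩))).1 (sub_pos.2 hmz)
    have hre' := (neg_iff_neg_of_mul_pos (hsign (Sum.inl ⟨m + 1, hm'⟩))).1
    have him := (pos_iff_pos_of_mul_pos (hsign (Sum.inr ⟨n, hn⟩))).1 (sub_pos.2 hnz)
    have him' := (neg_iff_neg_of_mul_pos (hsign (Sum.inr ⟨n + 1, hn'⟩))).1
    simp only [grid_inl, grid_inr, Int.cast_add, Int.cast_one, add_one_mul, sub_pos,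
      sub_neg] at hre hre' him him'
    exact ⟨⟨hre, hre' hzm⟩, him, him' hzn⟩
  · refine subset_openCell_of_isPreconnected
      (convex_reProdIm (convex_Ioo _ _) (convex_Ioo _ _)).isPreconnected
      ⟨z, ⟨⟨hmz, hzm⟩, hnz, hzn⟩, hz⟩ (disjoint_left.2 ?_)
    rw [hyperplanes_smul]
    rintro w ⟨hre, him⟩ ⟨k | k, hk⟩
    · exact int_mul_notMem_Ioo hδ m k ((sub_eq_zero.1 hk : w.re = k * δ) ▸ hre)
    · exact int_mul_notMem_Ioo hδ n k ((sub_eq_zero.1 hk : w.im = k * δ) ▸ him)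

end Grid

section Refinement

variable {E I J : Type*} [NormedAddCommGroup E] [NormedSpace ℝ E] {g : I → E →ᵃ[ℝ] ℝ}
  {q : J → E →ᵃ[ℝ] ℝ} {P T : Set E}

lemma openCell_smul_sumElim (σ : I ⊕ J → ℤˣ) :
    openCell (σ • Sum.elim g q) =
      openCell ((σ ∘ Sum.inl) • g) ∩ openCell ((σ ∘ Sum.inr) • q) := by
  ext z
  simp [openCell]

lemma hyperplanes_sumElim : hyperplanes (Sum.elim g q) = hyperplanes g ∪ hyperplanes q := by
  ext z
  simp [hyperplanes]

variable [FiniteDimensional ℝ E]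

lemma openCell_smul_sumElim_eq_of_disjoint [Finite J] {σ : I ⊕ J → ℤˣ}
    (hne : (openCell (σ • Sum.elim g q)).Nonempty)
    (hdisj : Disjoint (openCell ((σ ∘ Sum.inl) • g)) (hyperplanes q)) :
    openCell (σ • Sum.elim g q) = openCell ((σ ∘ Sum.inl) • g) := by
  rw [openCell_smul_sumElim] at hne ⊢
  rw [← hyperplanes_smul (σ ∘ Sum.inr) q] at hdisj
  exact inter_eq_left.2 (subset_openCell_of_isPreconnected convex_openCell.isPreconnected hne hdisj)

variable [MeasurableSpace E] [BorelSpace E] (μ : Measure E)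

lemma tsum_measure_openCell_smul_le [Finite J] (S : Set (J → ℤˣ))
    (hS : ∀ σ ∈ S, openCell (σ • q) ⊆ T) :
    ∑' σ : S, μ (openCell ((σ : J → ℤˣ) • q)) ≤ μ T :=
  (tsum_meas_le_meas_iUnion_of_disjoint μ (fun _ ↦ isOpen_openCell.measurableSet)
    fun _ _ hne ↦ disjoint_openCell_smul (Subtype.coe_ne_coe.2 hne)).trans
      (measure_mono (iUnion_subset fun σ ↦ hS σ σ.2))

lemma tsum_measure_openCell_comp_inl_le [Finite I] (S : Set (I ⊕ J → ℤˣ))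
    (hS : ∀ σ ∈ S, openCell ((σ ∘ Sum.inl) • g) ⊆ T) :
    ∑' σ : S, μ (openCell (((σ : I ⊕ J → ℤˣ) ∘ Sum.inl) • g)) ≤ ENat.card (J → ℤˣ) * μ T := by
  let B : Set (I → ℤˣ) := {ρ | openCell (ρ • g) ⊆ T}
  let restrict (σ : S) : (J → ℤˣ) × B :=
    (σ.1 ∘ Sum.inr, ⟨σ.1 ∘ Sum.inl, hS σ σ.2⟩)
  have hrestrict : Function.Injective restrict := fun σ τ h ↦ by
    simp only [restrict, Prod.mk.injEq, Subtype.mk.injEq] at h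
    refine Subtype.ext (funext fun i ↦ ?_)
    rcases i with i | j
    · exact congrFun h.2 i
    · exact congrFun h.1 j
  calc ∑' σ : S, μ (openCell (((σ : I ⊕ J → ℤˣ) ∘ Sum.inl) • g))
      ≤ ∑' x : (J → ℤˣ) × B, μ (openCell ((x.2 : I → ℤˣ) • g)) :=
        ENNReal.tsum_comp_le_tsum_of_injective hrestrict fun x ↦ μ (openCell (x.2.1 • g))
    _ = ENat.card (J → ℤˣ) * ∑' ρ : B, μ (openCell ((ρ : I → ℤˣ) • g)) :=
        ENNReal.tsum_prod.trans
          (ENNReal.tsum_const (∑' ρ : B, μ (openCell ((ρ : I → ℤˣ) • g))))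
    _ ≤ ENat.card (J → ℤˣ) * μ T := by
        gcongr
        exact tsum_measure_openCell_smul_le μ B fun ρ hρ ↦ hρ

lemma tsum_chambers_measure_openCell_comp_inl_le [Finite I] [Finite J]
    (hT : ∀ σ ∈ chambers (Sum.elim g q) P,
      (openCell ((σ ∘ Sum.inl) • g) ∩ hyperplanes q).Nonempty →
        openCell ((σ ∘ Sum.inl) • g) ⊆ T) :
    ∑' σ : chambers (Sum.elim g q) P, μ (openCell (((σ : I ⊕ J → ℤˣ) ∘ Sum.inl) • g)) ≤
      μ P + ENat.card (J → ℤˣ) * μ T := by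
  let crossed : Set (I ⊕ J → ℤˣ) := {σ | (openCell ((σ ∘ Sum.inl) • g) ∩ hyperplanes q).Nonempty}
  have huncrossed : ∀ σ ∈ chambers (Sum.elim g q) P \ crossed,
      openCell (σ • Sum.elim g q) = openCell ((σ ∘ Sum.inl) • g) := fun σ hσ ↦
    openCell_smul_sumElim_eq_of_disjoint hσ.1.1
      (disjoint_iff_inter_eq_empty.2 (not_nonempty_iff_eq_empty.1 hσ.2))
  rw [← sdiff_union_inter (chambers (Sum.elim g q) P) crossed]
  refine (ENNReal.tsum_union_le (fun σ ↦ μ (openCell ((σ ∘ Sum.inl) • g))) _ _).trans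
    (add_le_add ?_ ?_)
  · exact (tsum_congr fun σ : ↥(chambers (Sum.elim g q) P \ crossed) ↦
      congrArg μ (huncrossed σ.1 σ.2).symm).trans_le
        (tsum_measure_openCell_smul_le μ _ fun σ hσ ↦ hσ.1.2.trans interior_subset)
  · exact tsum_measure_openCell_comp_inl_le μ _ fun σ hσ ↦ hT σ hσ.1 hσ.2

end Refinement

section GridRefinement

variable {J : Type*} {q : J → ℂ →ᵃ[ℝ] ℝ} {P : Set ℂ} {δ : ℝ} {N : ℕ}
  {σ : (Icc (-N : ℤ) N ⊕ Icc (-N : ℤ) N) ⊕ J → ℤˣ}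

lemma exists_openCell_grid_eq_of_mem_chambers (hδ : 0 < δ) (hPN : P ⊆ ball 0 (N * δ))
    (hσ : σ ∈ chambers (Sum.elim (grid δ N) q) P) :
    ∃ a b, openCell ((σ ∘ Sum.inl) • grid δ N) = Ioo a (a + δ) ×ℂ Ioo b (b + δ) := by
  obtain ⟨⟨z, hz⟩, hσP⟩ := hσ
  have hzP : z ∈ P := interior_subset (hσP hz)
  rw [openCell_smul_sumElim] at hz
  exact exists_openCell_grid_eq hδ hz.1 (mem_ball_zero_iff.1 (hPN hzP))

lemma dist_le_of_mem_openCell_grid (hδ : 0 < δ) (hPN : P ⊆ ball 0 (N * δ))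
    (hσ : σ ∈ chambers (Sum.elim (grid δ N) q) P) {z w : ℂ}
    (hz : z ∈ openCell ((σ ∘ Sum.inl) • grid δ N))
    (hw : w ∈ openCell ((σ ∘ Sum.inl) • grid δ N)) : dist z w ≤ 2 * δ := by
  obtain ⟨a, b, hsquare⟩ := exists_openCell_grid_eq_of_mem_chambers hδ hPN hσ
  rw [hsquare] at hz hw
  obtain ⟨⟨hzre, hzre'⟩, hzim, hzim'⟩ := hz
  obtain ⟨⟨hwre, hwre'⟩, hwim, hwim'⟩ := hw
  have hre : |(z - w).re| ≤ δ := by rw [Complex.sub_re, abs_le]; constructor <;> linarith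
  have him : |(z - w).im| ≤ δ := by rw [Complex.sub_im, abs_le]; constructor <;> linarith
  rw [dist_eq_norm]
  linarith [Complex.norm_le_abs_re_add_abs_im (z - w)]

lemma openCell_grid_subset_cthickening (hδ : 0 < δ) (hδ1 : 2 * δ ≤ 1) (hPN : P ⊆ ball 0 (N * δ))
    (hσ : σ ∈ chambers (Sum.elim (grid δ N) q) P)
    (hmeet : (openCell ((σ ∘ Sum.inl) • grid δ N) ∩ hyperplanes q).Nonempty) :
    openCell ((σ ∘ Sum.inl) • grid δ N) ⊆
      cthickening (2 * δ) (cthickening 1 P ∩ hyperplanes q) := fun z hz ↦ by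
  obtain ⟨w, hw, hwq⟩ := hmeet
  obtain ⟨v, hv⟩ := hσ.1
  have hvP : v ∈ P := interior_subset (hσ.2 hv)
  rw [openCell_smul_sumElim] at hv
  have hwP : w ∈ cthickening 1 P := mem_cthickening_of_dist_le w v 1 P hvP
    ((dist_le_of_mem_openCell_grid hδ hPN hσ hw hv.1).trans hδ1)
  exact mem_cthickening_of_dist_le z w _ _ ⟨hwP, hwq⟩
    (dist_le_of_mem_openCell_grid hδ hPN hσ hz hw)

variable [Finite J]

lemma hausdorffMeasure_frontier_chamber_le (hδ : 0 < δ) (hPN : P ⊆ ball 0 (N * δ))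
    (hσ : σ ∈ chambers (Sum.elim (grid δ N) q) P) :
    μH[1] (frontier (closedCell (σ • Sum.elim (grid δ N) q))) ≤ ENNReal.ofReal (4 * δ) := by
  obtain ⟨a, b, hsquare⟩ := exists_openCell_grid_eq_of_mem_chambers hδ hPN hσ
  have hsub : closedCell (σ • Sum.elim (grid δ N) q) ⊆ Icc a (a + δ) ×ℂ Icc b (b + δ) := by
    rw [← closure_openCell hσ.1, openCell_smul_sumElim, hsquare]
    exact closure_minimal
      (inter_subset_left.trans fun z hz ↦ ⟨Ioo_subset_Icc_self hz.1, Ioo_subset_Icc_self hz.2⟩)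
      (isClosed_Icc.reProdIm isClosed_Icc)
  have hint : (interior (closedCell (σ • Sum.elim (grid δ N) q))).Nonempty := by
    rw [interior_closedCell hσ.1]
    exact hσ.1
  calc μH[1] (frontier (closedCell (σ • Sum.elim (grid δ N) q)))
      ≤ μH[1] (frontier (Icc a (a + δ) ×ℂ Icc b (b + δ))) :=
        hausdorffMeasure_frontier_mono_of_convex convex_closedCell isClosed_closedCell hint hsub
          (isCompact_Icc.reProdIm isCompact_Icc) zero_le_one
    _ ≤ ENNReal.ofReal (2 * δ + 2 * δ) :=
        hausdorffMeasure_frontier_Icc_reProdIm_Icc_le hδ.le hδ.le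
    _ = ENNReal.ofReal (4 * δ) := by ring_nf

lemma sq_hausdorffMeasure_frontier_chamber_le (hδ : 0 < δ) (hPN : P ⊆ ball 0 (N * δ))
    (hσ : σ ∈ chambers (Sum.elim (grid δ N) q) P) :
    μH[1] (frontier (closedCell (σ • Sum.elim (grid δ N) q))) ^ 2 ≤
      16 * volume (openCell ((σ ∘ Sum.inl) • grid δ N)) := by
  obtain ⟨a, b, hsquare⟩ := exists_openCell_grid_eq_of_mem_chambers hδ hPN hσ
  calc μH[1] (frontier (closedCell (σ • Sum.elim (grid δ N) q))) ^ 2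
      ≤ ENNReal.ofReal (4 * δ) ^ 2 := by
        gcongr
        exact hausdorffMeasure_frontier_chamber_le hδ hPN hσ
    _ = 16 * volume (openCell ((σ ∘ Sum.inl) • grid δ N)) := by
        rw [hsquare, volume_reProdIm measurableSet_Ioo measurableSet_Ioo, Real.volume_Ioo,
          Real.volume_Ioo, add_sub_cancel_left, add_sub_cancel_left,
          ENNReal.ofReal_mul zero_le_four, mul_pow, sq (ENNReal.ofReal δ)]
        norm_num

lemma tsum_sq_hausdorffMeasure_frontier_chamber_le (hδ : 0 < δ) (hδ1 : 2 * δ ≤ 1)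
    (hPN : P ⊆ ball 0 (N * δ))
    (hsmall : 16 * (ENat.card (J → ℤˣ) *
      volume (cthickening (2 * δ) (cthickening 1 P ∩ hyperplanes q))) ≤ volume P) :
    ∑' σ : chambers (Sum.elim (grid δ N) q) P,
      μH[1] (frontier (closedCell (σ.1 • Sum.elim (grid δ N) q))) ^ 2 ≤ 17 * volume P :=
  calc ∑' σ : chambers (Sum.elim (grid δ N) q) P,
        μH[1] (frontier (closedCell (σ.1 • Sum.elim (grid δ N) q))) ^ 2
      ≤ ∑' σ : chambers (Sum.elim (grid δ N) q) P,
          16 * volume (openCell ((σ.1 ∘ Sum.inl) • grid δ N)) :=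
        ENNReal.tsum_le_tsum fun σ ↦ sq_hausdorffMeasure_frontier_chamber_le hδ hPN σ.2
    _ ≤ 16 * (volume P + ENat.card (J → ℤˣ) *
          volume (cthickening (2 * δ) (cthickening 1 P ∩ hyperplanes q))) := by
        rw [ENNReal.tsum_mul_left]
        gcongr
        exact tsum_chambers_measure_openCell_comp_inl_le volume fun σ hσ ↦
          openCell_grid_subset_cthickening hδ hδ1 hPN hσ
    _ ≤ 16 * volume P + volume P := by
        rw [mul_add]
        gcongr
    _ = 17 * volume P := by
        rw [← add_one_mul]
        norm_num

end GridRefinement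

section Decomposition

variable {J : Type*} {q : J → ℂ →ᵃ[ℝ] ℝ} {P : Set ℂ} {ε : ℝ}

lemma exists_mesh [Finite J] (hP : IsCompact P) (hPint : (interior P).Nonempty)
    (hq : ∀ j, (q j).linear ≠ 0) (hε : 0 < ε) :
    ∃ (δ : ℝ) (N : ℕ), 0 < δ ∧ 4 * δ < ε ∧ 2 * δ ≤ 1 ∧ P ⊆ ball 0 (N * δ) ∧
      16 * (ENat.card (J → ℤˣ) *
        volume (cthickening (2 * δ) (cthickening 1 P ∩ hyperplanes q))) ≤ volume P := by
  have hvolume : 0 < volume P := Measure.measure_pos_of_nonempty_interior volume hPint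
  have hcard : (ENat.card (J → ℤˣ) : ℝ≥0∞) ≠ ∞ :=
    ENat.toENNReal_ne_top.2 (ENat.card_lt_top.2 inferInstance).ne
  have hscale : Filter.Tendsto (fun δ : ℝ ↦ 2 * δ) (𝓝 0) (𝓝 0) :=
    Continuous.tendsto' (by fun_prop) _ _ (mul_zero 2)
  have hsmall : Filter.Tendsto (fun δ : ℝ ↦ 16 * (ENat.card (J → ℤˣ) *
      volume (cthickening (2 * δ) (cthickening 1 P ∩ hyperplanes q)))) (𝓝 0) (𝓝 0) := by
    have hnear := (tendsto_measure_cthickening_inter_hyperplanes volume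
      (hP.cthickening (r := 1)) hq).comp hscale
    simpa only [mul_zero, Function.comp_apply] using ENNReal.Tendsto.const_mul
      (ENNReal.Tendsto.const_mul hnear (.inr hcard)) (.inr ENNReal.ofNat_ne_top)
  have hδ_lt {c : ℝ} (hc : 0 < c) : ∀ᶠ δ in 𝓝[>] (0 : ℝ), δ < c :=
    (eventually_lt_nhds hc).filter_mono nhdsWithin_le_nhds
  obtain ⟨δ, hδ, hδε, hδ1, hδP⟩ := (eventually_mem_nhdsWithin.and <|
    (hδ_lt (by positivity : 0 < ε / 4)).and <| (hδ_lt one_half_pos).and <|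
      (hsmall.eventually_le_const hvolume).filter_mono nhdsWithin_le_nhds).exists
  rw [mem_Ioi] at hδ
  obtain ⟨R, hR⟩ := hP.isBounded.subset_ball 0
  obtain ⟨N, hN⟩ := exists_nat_ge (R / δ)
  exact ⟨δ, N, hδ, by linarith, by linarith,
    hR.trans (ball_subset_ball ((div_le_iff₀ hδ).1 hN)), hδP⟩

namespace IsPolygonalDisk

lemma subset_closure_interior (hP : IsPolygonalDisk P) : P ⊆ closure (interior P) :=
  hP.2.1.elim subset_closure_interior_of_homeomorph_closedBall

lemma joinedBy_frontier (hP : IsPolygonalDisk P) {x y : ℂ} (hx : x ∈ frontier P)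
    (hy : y ∈ frontier P) : JoinedBy (frontier P) x y (μH[1] (frontier P) / 2) := by
  obtain ⟨hPcompact, ⟨e⟩, -⟩ := hP
  obtain ⟨γ, hγ, hinj, hrange⟩ := exists_circle_param_frontier hPcompact.isClosed e
  rw [← hrange] at hx hy ⊢
  exact joinedBy_half_hausdorffMeasure_of_circle hγ hinj hx hy

lemma joinedBy_inter_hyperplanes (hP : IsPolygonalDisk P) (hF : frontier P ⊆ hyperplanes q) :
    ∀ x ∈ P ∩ hyperplanes q, ∀ y ∈ P ∩ hyperplanes q,
      JoinedBy (P ∩ hyperplanes q) x y (μH[1] (frontier P)) :=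
  joinedBy_of_chords (subset_inter hP.1.isClosed.frontier_subset hF)
    (fun _ ha _ hb ↦ hP.joinedBy_frontier ha hb)
    (exists_chord_hyperplanes (Complex.finrank_real_complex ▸ one_lt_two) hP.1)

lemma of_mem_chambers [Finite J] (hP : IsCompact P) {σ : J → ℤˣ} (hσ : σ ∈ chambers q P) :
    IsPolygonalDisk (closedCell (σ • q)) :=
  isPolygonalDisk_closedCell hσ.1
    (hP.of_isClosed_subset isClosed_closedCell (closedCell_subset_of_mem_chambers hP.isClosed hσ))

lemma exists_fine_arrangement (hP : IsPolygonalDisk P) (hε : 0 < ε) :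
    ∃ (I : Type) (_ : Finite I) (r : I → ℂ →ᵃ[ℝ] ℝ),
      (∀ i, (r i).linear ≠ 0) ∧ frontier P ⊆ hyperplanes r ∧
      (∀ σ ∈ chambers r P, μH[1] (frontier (closedCell (σ • r))) < ENNReal.ofReal ε) ∧
      ∑' σ : chambers r P, μH[1] (frontier (closedCell (σ.1 • r))) ^ 2 ≤ 17 * volume P := by
  obtain ⟨J, _, q, hq, hF⟩ := hP.exists_frontier_subset_hyperplanes
  obtain ⟨hPcompact, ⟨e⟩, -⟩ := hP
  obtain ⟨δ, N, hδ, hδε, hδ1, hPN, hsmall⟩ :=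
    exists_mesh hPcompact (interior_nonempty_of_homeomorph_closedBall e) hq hε
  exact ⟨_, inferInstance, Sum.elim (grid δ N) q, Sum.forall.2 ⟨linear_grid_ne_zero, hq⟩,
    hF.trans (hyperplanes_sumElim.symm.subset.trans' subset_union_right),
    fun σ hσ ↦ (hausdorffMeasure_frontier_chamber_le hδ hPN hσ).trans_lt
      ((ENNReal.ofReal_lt_ofReal_iff hε).2 hδε),
    tsum_sq_hausdorffMeasure_frontier_chamber_le hδ hδ1 hPN hsmall⟩

end IsPolygonalDisk

end Decomposition

theorem polygonal_disk_decomposition (P : Set ℂ) (hP : IsPolygonalDisk P)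
    (ε : ℝ) (hε : 0 < ε) :
    ∃ (n : ℕ) (Q : Fin n → Set ℂ),
      -- a decomposition of `P` into non-overlapping polygonal disks:
      (∀ k, IsPolygonalDisk (Q k)) ∧
      (⋃ k, Q k) = P ∧
      (∀ k l, k ≠ l → interior (Q k) ∩ interior (Q l) = ∅) ∧
      -- (i) each piece has boundary length less than ε:
      (∀ k, MeasureTheory.Measure.hausdorffMeasure 1 (frontier (Q k)) < ENNReal.ofReal ε) ∧
      -- (ii) any two points of the union of the boundaries are joined by a path in that
      -- union of length at most ℓ(∂P):
      (∀ x ∈ ⋃ k, frontier (Q k), ∀ y ∈ ⋃ k, frontier (Q k),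
        ∃ γ : ℝ → ℂ, ContinuousOn γ (Set.Icc 0 1) ∧ γ 0 = x ∧ γ 1 = y ∧
          γ '' Set.Icc 0 1 ⊆ ⋃ k, frontier (Q k) ∧
          eVariationOn γ (Set.Icc 0 1) ≤
            MeasureTheory.Measure.hausdorffMeasure 1 (frontier P)) ∧
      -- (iii) the sum of the squared boundary lengths is at most 17·H²(P):
      (∑ k, (MeasureTheory.Measure.hausdorffMeasure 1 (frontier (Q k))) ^ 2 ≤
        17 * MeasureTheory.volume P) := by
  obtain ⟨I, _, r, hr, hF, hsmall, hsq⟩ := hP.exists_fine_arrangement hε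
  have hPclosed : IsClosed P := hP.1.isClosed
  obtain ⟨n, ⟨e⟩⟩ := Finite.exists_equiv_fin (chambers r P)
  let piece (σ : chambers r P) : Set ℂ := closedCell (σ.1 • r)
  have hskeleton : ⋃ k, frontier (piece (e.symm k)) = P ∩ hyperplanes r :=
    (e.symm.surjective.iUnion_comp fun σ ↦ frontier (piece σ)).trans
      (iUnion_frontier_closedCell_chambers hPclosed hP.subset_closure_interior hF hr)
  refine ⟨n, fun k ↦ piece (e.symm k), fun k ↦ .of_mem_chambers hP.1 (e.symm k).2, ?_,
    fun k l hkl ↦ ?_, fun k ↦ hsmall _ (e.symm k).2, ?_, ?_⟩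
  · exact (e.symm.surjective.iUnion_comp piece).trans
      (iUnion_closedCell_chambers hPclosed hP.subset_closure_interior hF hr)
  · exact (disjoint_interior_closedCell_smul (Subtype.coe_ne_coe.2 (e.symm.injective.ne hkl))
      (e.symm k).2.1 (e.symm l).2.1).inter_eq
  · rw [hskeleton]
    exact hP.joinedBy_inter_hyperplanes hF
  · exact ((tsum_fintype _).symm.trans
      (e.symm.tsum_eq fun σ ↦ μH[1] (frontier (piece σ)) ^ 2)).trans_le hsq
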